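/- arXiv:2603.12954 — 10 statements merged into one kernel-verified Lean document; each statement's English description precedes it below -/
import Mathlib

section
/- Let X be a metric space, μ an Ahlfors s-regular Borel measure on X for some s ∈ (0,∞), (Y,ρ) a metric space, 0 < r < 1 and 0 < q < ∞ with rq ≤ s, and let u ∈ W^{r,q}_{loc}(X,μ;Y). Define D := { x ∈ X : limsup_{ε→0⁺} ⨍_{B_ε(x)} ⨍_{B_ε(x)} ρ(u(z),u(y))^q dμ(z) dμ(y) > 0 }. Then H^{s−rq}(D) = 0; in other words, H^{s−rq}-almost every point of X is an average Lebesgue point of u. -/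
open MeasureTheory Metric Filter Set
open scoped ENNReal Topology

/-- A Borel measure `μ` on a metric space is Ahlfors `s`-regular. -/
def IsAhlfors {X : Type*} [MetricSpace X] [MeasurableSpace X]
    (μ : Measure X) (s : ℝ) : Prop :=
  ∃ c C : ℝ, 0 < c ∧ 0 < C ∧ ∀ (x : X) (ρ : ℝ), 0 < ρ →
    ENNReal.ofReal ρ < EMetric.diam (Set.univ : Set X) →
    ENNReal.ofReal (c * ρ ^ s) ≤ μ (closedBall x ρ) ∧
      μ (closedBall x ρ) ≤ ENNReal.ofReal (C * ρ ^ s)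

/-- `u ∈ W^{r,q}_loc(X,μ;Y)`: `u` is measurable, `F_u(x,z) = ρ(u x, u z)` is locally
`q`-integrable on `X × X`, and the fractional Sobolev energy is finite on every ball. -/
def MemFracSobolevLoc {X Y : Type*} [MetricSpace X] [MeasurableSpace X] [MetricSpace Y]
    [MeasurableSpace Y] [BorelSpace Y]
    (μ : Measure X) (r q s : ℝ) (u : X → Y) : Prop :=
  Measurable u ∧
  (∀ (x : X) (R : ℝ), 0 < R →
    ∫⁻ z in closedBall x R, ∫⁻ y in closedBall x R, edist (u z) (u y) ^ q ∂μ ∂μ < ⊤) ∧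
  (∀ (x : X) (R : ℝ), 0 < R →
    ∫⁻ z in closedBall x R, ∫⁻ y in closedBall x R,
      edist (u z) (u y) ^ q / edist z y ^ (r * q + s) ∂μ ∂μ < ⊤)

/-- The double average `⨍_{B_ε(x)} ⨍_{B_ε(x)} W(z,y) dμ(z) dμ(y)`. -/
noncomputable def doubleAvg {X : Type*} [MetricSpace X] [MeasurableSpace X]
    (μ : Measure X) (W : X → X → ℝ≥0∞) (x : X) (ε : ℝ) : ℝ≥0∞ :=
  (μ (closedBall x ε))⁻¹ * (μ (closedBall x ε))⁻¹ *
    ∫⁻ z in closedBall x ε, ∫⁻ y in closedBall x ε, W z y ∂μ ∂μ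


/-- Monotone convergence to `0` for lower integrals of possibly non-measurable functions. -/
theorem lower_dct {X : Type*} [MeasurableSpace X] (μ : Measure X) (G : ℕ → X → ℝ≥0∞)
    (hanti : Antitone G) (h01 : ∀ z, (⨅ n, G n z) = 0 ∨ (⨅ n, G n z) = ⊤)
    (hfin : ∫⁻ z, G 0 z ∂μ < ⊤) : Tendsto (fun n => ∫⁻ z, G n z ∂μ) atTop (𝓝 0) := by
  choose h hm hle heq using fun n => exists_measurable_le_lintegral_eq (μ := μ) (G n)
  have hsup : ∫⁻ z, (⨆ n, h n z) ∂μ ≠ ⊤ := by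
    refine ne_of_lt (lt_of_le_of_lt (lintegral_mono fun z => ?_) hfin)
    exact iSup_le fun n => (hle n z).trans (hanti (Nat.zero_le n) z)
  have hlim := limsup_lintegral_le (μ := μ) (f := h) (fun z => ⨆ n, h n z) hm
    (fun n => Eventually.of_forall fun z => le_iSup (fun n => h n z) n) hsup
  set k : X → ℝ≥0∞ := fun z => limsup (fun n => h n z) atTop with hk
  have hkm : Measurable k := Measurable.limsup hm
  have hkG : ∀ z, k z ≤ ⨅ n, G n z := by
    intro z
    refine le_iInf fun N => ?_
    refine limsup_le_of_le (by isBoundedDefault) ?_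
    filter_upwards [eventually_ge_atTop N] with n hn
    exact (hle n z).trans (hanti hn z)
  have hk2 : ∀ z, ⊤ * k z ≤ G 0 z := by
    intro z
    rcases h01 z with h0 | h0
    · have : k z = 0 := le_antisymm (h0 ▸ hkG z) zero_le
      simp [this]
    · exact le_top.trans (h0 ▸ iInf_le (fun n => G n z) 0)
  have hk3 : ⊤ * ∫⁻ z, k z ∂μ < ⊤ := by
    rw [← lintegral_const_mul _ hkm]
    exact (lintegral_mono hk2).trans_lt hfin
  have hk4 : ∫⁻ z, k z ∂μ = 0 := by
    by_contra hne
    rw [ENNReal.top_mul hne] at hk3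
    exact lt_irrefl _ hk3
  rw [hk4] at hlim
  refine tendsto_of_le_liminf_of_limsup_le (by simp) ?_
  simp_rw [heq]
  exact hlim

theorem covering_null {X : Type*} [MetricSpace X] [MeasurableSpace X] [BorelSpace X]
    (d : ℝ) (hd : 0 ≤ d) (S : Set X) (ν : ℕ → Measure X) (hfin : ∀ n, ν n univ < ⊤)
    (hν : Tendsto (fun n => ν n univ) atTop (𝓝 0)) (M : ℝ≥0∞) (hM : M ≠ ⊤)
    (h : ∀ n : ℕ, ∀ x ∈ S, ∃ ε : ℝ, 0 < ε ∧ ε ≤ 1 / ((n : ℝ) + 1) ∧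
      ENNReal.ofReal ε ^ d ≤ M * ν n (closedBall x ε)) : μH[d] S = 0 := by
  choose! e he0 he1 he2 using h
  choose U hUS hdisj hcov using fun n : ℕ =>
    Vitali.exists_disjoint_subfamily_covering_enlargement_closedBall S (fun x : X => x) (e n)
      (1 / ((n : ℝ) + 1)) (he1 n) 5 (by norm_num)
  have hpd : ∀ n, Pairwise (Function.onFun Disjoint
      (fun i : U n => closedBall (i : X) (e n i))) := by
    intro n i j hij
    exact hdisj n i.2 j.2 (fun hh => hij (Subtype.ext hh))
  have hcount : ∀ n, Countable (U n) := by
    intro n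
    haveI : IsFiniteMeasure (ν n) := ⟨hfin n⟩
    have := Measure.countable_meas_pos_of_disjoint_iUnion (μ := ν n)
      (As := fun i : U n => closedBall (i : X) (e n i))
      (fun i => measurableSet_closedBall) (hpd n)
    have hu : {i : U n | 0 < ν n (closedBall (i : X) (e n i))} = univ := by
      ext i
      simp only [mem_setOf_eq, mem_univ, iff_true]
      have h1 := he2 n i (hUS n i.2)
      have h2 : 0 < ENNReal.ofReal (e n i) ^ d :=
        ENNReal.rpow_pos (ENNReal.ofReal_pos.2 (he0 n i (hUS n i.2))) ENNReal.ofReal_ne_top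
      have h3 := h2.trans_le h1
      rw [pos_iff_ne_zero] at h3 ⊢
      intro h0
      exact h3 (by rw [h0, mul_zero])
    rw [hu] at this
    exact countable_univ_iff.1 this
  have hdiam : ∀ n (i : U n), Metric.ediam (closedBall (i : X) (5 * e n i)) ≤
      10 * ENNReal.ofReal (e n i) := by
    intro n i
    rw [← closedEBall_ofReal (by have := he0 n i (hUS n i.2); positivity)]
    refine Metric.ediam_closedEBall_le.trans ?_
    rw [ENNReal.ofReal_mul (by norm_num), ← mul_assoc]
    gcongr
    rw [show (10 : ℝ≥0∞) = ENNReal.ofReal 10 by simp, show (2 : ℝ≥0∞) = ENNReal.ofReal 2 by simp,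
      ← ENNReal.ofReal_mul (by norm_num)]
    norm_num
  have hle := Measure.hausdorffMeasure_le_liminf_tsum (ι := fun n => U n) d S (l := atTop)
    (fun n : ℕ => 10 * ENNReal.ofReal (1 / ((n : ℝ) + 1))) (by
      have h1 := ENNReal.tendsto_ofReal (tendsto_one_div_add_atTop_nhds_zero_nat (𝕜 := ℝ))
      have h2 := ENNReal.Tendsto.const_mul (a := 10) h1 (Or.inr (by simp))
      simpa using h2)
    (fun n i => closedBall (i : X) (5 * e n i))
    (Eventually.of_forall fun n i => (hdiam n i).trans (by
      gcongr
      exact he1 n i (hUS n i.2)))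
    (Eventually.of_forall fun n x hx => by
      obtain ⟨b, hb, hsub⟩ := hcov n x hx
      exact mem_iUnion.2 ⟨⟨b, hb⟩, hsub (mem_closedBall_self (he0 n x hx).le)⟩)
  have hbd : ∀ n, ∑' i : U n, Metric.ediam (closedBall (i : X) (5 * e n i)) ^ d ≤
      10 ^ d * M * ν n univ := by
    intro n
    calc ∑' i : U n, Metric.ediam (closedBall (i : X) (5 * e n i)) ^ d
        ≤ ∑' i : U n, 10 ^ d * M * ν n (closedBall (i : X) (e n i)) := by
          refine ENNReal.tsum_le_tsum fun i => ?_
          calc Metric.ediam (closedBall (i : X) (5 * e n i)) ^ d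
              ≤ (10 * ENNReal.ofReal (e n i)) ^ d := ENNReal.rpow_le_rpow (hdiam n i) hd
            _ = 10 ^ d * ENNReal.ofReal (e n i) ^ d := ENNReal.mul_rpow_of_nonneg _ _ hd
            _ ≤ 10 ^ d * (M * ν n (closedBall (i : X) (e n i))) := by
                gcongr
                exact he2 n i (hUS n i.2)
            _ = _ := (mul_assoc _ _ _).symm
      _ = 10 ^ d * M * ∑' i : U n, ν n (closedBall (i : X) (e n i)) := ENNReal.tsum_mul_left
      _ ≤ 10 ^ d * M * ν n univ := by
          gcongr
          exact (tsum_meas_le_meas_iUnion_of_disjoint (ν n)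
            (fun i => measurableSet_closedBall) (hpd n)).trans (measure_mono (subset_univ _))
  have hlim0 : Tendsto (fun n => 10 ^ d * M * ν n univ) atTop (𝓝 0) := by
    have := ENNReal.Tendsto.const_mul (a := 10 ^ d * M) hν
      (Or.inr (ENNReal.mul_ne_top (ENNReal.rpow_ne_top_of_nonneg hd (by simp)) hM))
    simpa using this
  refine le_antisymm (hle.trans ?_) zero_le
  exact (liminf_le_liminf (Eventually.of_forall hbd)).trans hlim0.liminf_eq.le

/-- The truncated energy density. -/
noncomputable def truncEnergy {X Y : Type*} [MetricSpace X] [MeasurableSpace X] [MetricSpace Y]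
    (μ : Measure X) (q p : ℝ) (u : X → Y) (B : Set X) (n : ℕ) (z : X) : ℝ≥0∞ :=
  ∫⁻ y in closedBall z (2 * (1 / ((n : ℝ) + 1))),
    edist (u z) (u y) ^ q / edist z y ^ p ∂(μ.restrict B)

theorem truncEnergy_anti {X Y : Type*} [MetricSpace X] [MeasurableSpace X] [MetricSpace Y]
    (μ : Measure X) (q p : ℝ) (u : X → Y) (B : Set X) : Antitone (truncEnergy μ q p u B) := by
  intro m n hmn z
  refine lintegral_mono_set (closedBall_subset_closedBall ?_)
  gcongr

theorem truncEnergy_iInf {X Y : Type*} [MetricSpace X] [MeasurableSpace X] [BorelSpace X]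
    [MetricSpace Y] (μ : Measure X) (q p : ℝ) (hq : 0 < q) (u : X → Y) (B : Set X) (z : X) :
    (⨅ n, truncEnergy μ q p u B n z) = 0 ∨ (⨅ n, truncEnergy μ q p u B n z) = ⊤ := by
  by_cases hall : ∀ n, truncEnergy μ q p u B n z = ⊤
  · right; simp [hall]
  left
  push Not at hall
  obtain ⟨N, hN⟩ := hall
  set ν := (μ.restrict B).withDensity (fun y => edist (u z) (u y) ^ q / edist z y ^ p) with hνdef
  have hν : ∀ n, truncEnergy μ q p u B n z = ν (closedBall z (2 * (1 / ((n : ℝ) + 1)))) := by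
    intro n
    rw [hνdef, withDensity_apply _ measurableSet_closedBall]; rfl
  have hT := tendsto_measure_iInter_atTop (μ := ν)
    (s := fun n : ℕ => closedBall z (2 * (1 / ((n : ℝ) + 1))))
    (fun n => measurableSet_closedBall.nullMeasurableSet)
    (fun m n hmn => closedBall_subset_closedBall (by gcongr)) ⟨N, by rw [← hν]; exact hN⟩
  have hI : (⋂ n : ℕ, closedBall z (2 * (1 / ((n : ℝ) + 1)))) ⊆ {z} := by
    intro y hy
    have h1 : ∀ n : ℕ, dist y z ≤ 2 * (1 / ((n : ℝ) + 1)) := fun n => mem_iInter.1 hy n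
    have h2 := (tendsto_one_div_add_atTop_nhds_zero_nat (𝕜 := ℝ)).const_mul 2
    have h3 := ge_of_tendsto' h2 h1
    rw [mul_zero] at h3
    exact dist_le_zero.1 h3
  have h0 : ν {z} = 0 := by
    rw [hνdef, withDensity_apply _ (measurableSet_singleton z), lintegral_singleton]
    simp [hq]
  rw [measure_mono_null hI h0] at hT
  refine le_antisymm (ge_of_tendsto' hT fun n => ?_) zero_le
  refine (iInf_le _ n).trans ?_
  rw [hν]; rfl

theorem avg_bound {X Y : Type*} [MetricSpace X] [MeasurableSpace X] [BorelSpace X]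
    [MetricSpace Y] (μ : Measure X) (q p s c : ℝ) (hq : 0 < q) (hp : 0 < p) (hc : 0 < c)
    (u : X → Y) (B : Set X) (hB : MeasurableSet B) (n : ℕ) (x : X) (ε : ℝ) (hε : 0 < ε)
    (hεn : ε ≤ 1 / ((n : ℝ) + 1)) (hsub : closedBall x ε ⊆ B)
    (hreg : ENNReal.ofReal (c * ε ^ s) ≤ μ (closedBall x ε)) (t : ℝ≥0∞) (ht : t ≠ 0) (ht' : t ≠ ⊤)
    (hlt : t < doubleAvg μ (fun z y => edist (u z) (u y) ^ q) x ε) :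
    ENNReal.ofReal ε ^ (s + s - p) ≤ (t⁻¹ * ENNReal.ofReal (c⁻¹ * c⁻¹ * 2 ^ p)) *
      ((μ.restrict B).withDensity (truncEnergy μ q p u B n)) (closedBall x ε) := by
  set E := ((μ.restrict B).withDensity (truncEnergy μ q p u B n)) (closedBall x ε) with hE
  have key : ∫⁻ z in closedBall x ε, ∫⁻ y in closedBall x ε, edist (u z) (u y) ^ q ∂μ ∂μ ≤
      ENNReal.ofReal (2 * ε) ^ p * E := by
    have hne : ENNReal.ofReal (2 * ε) ^ p ≠ ⊤ :=
      ENNReal.rpow_ne_top_of_nonneg hp.le ENNReal.ofReal_ne_top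
    rw [hE, withDensity_apply _ measurableSet_closedBall,
      Measure.restrict_restrict_of_subset hsub, ← lintegral_const_mul' _ _ hne]
    refine setLIntegral_mono' measurableSet_closedBall fun z hz => ?_
    have hss : closedBall x ε ⊆ closedBall z (2 * (1 / ((n : ℝ) + 1))) ∩ B := by
      intro y hy
      refine ⟨?_, hsub hy⟩
      have h1 := dist_triangle_right y z x
      rw [mem_closedBall] at hy hz ⊢
      linarith
    unfold truncEnergy
    rw [Measure.restrict_restrict measurableSet_closedBall]
    refine le_trans ?_ (mul_le_mul_right (lintegral_mono_set hss) _)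
    rw [← lintegral_const_mul' _ _ hne]
    refine setLIntegral_mono' measurableSet_closedBall fun y hy => ?_
    by_cases hzy : z = y
    · subst hzy; simp [hq]
    have hd0 : edist z y ≠ 0 := by simpa using hzy
    have hdle : edist z y ≤ ENNReal.ofReal (2 * ε) := by
      rw [edist_dist]
      apply ENNReal.ofReal_le_ofReal
      have h1 := dist_triangle_right z y x
      rw [mem_closedBall] at hy hz
      linarith
    have hP0 : edist z y ^ p ≠ 0 := (ENNReal.rpow_pos (pos_iff_ne_zero.2 hd0) (edist_ne_top _ _)).ne'
    have hPt : edist z y ^ p ≠ ⊤ := ENNReal.rpow_ne_top_of_nonneg hp.le (edist_ne_top _ _)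
    calc edist (u z) (u y) ^ q = edist z y ^ p * (edist (u z) (u y) ^ q / edist z y ^ p) :=
          (ENNReal.mul_div_cancel hP0 hPt).symm
      _ ≤ _ := by gcongr
  have hcs : 0 < c * ε ^ s := by positivity
  have hinv : (μ (closedBall x ε))⁻¹ ≤ ENNReal.ofReal ((c * ε ^ s)⁻¹) := by
    rw [ENNReal.ofReal_inv_of_pos hcs]
    exact ENNReal.inv_le_inv.2 hreg
  have h1 : t ≤ ENNReal.ofReal ((c * ε ^ s)⁻¹) * ENNReal.ofReal ((c * ε ^ s)⁻¹) *
      (ENNReal.ofReal (2 * ε) ^ p * E) := by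
    refine hlt.le.trans ?_
    unfold doubleAvg
    gcongr
  have h2 : ENNReal.ofReal ε ^ (s + s - p) * (ENNReal.ofReal ((c * ε ^ s)⁻¹) *
      ENNReal.ofReal ((c * ε ^ s)⁻¹) * ENNReal.ofReal (2 * ε) ^ p) =
      ENNReal.ofReal (c⁻¹ * c⁻¹ * 2 ^ p) := by
    rw [ENNReal.ofReal_rpow_of_pos hε, ENNReal.ofReal_rpow_of_pos (by positivity),
      ← ENNReal.ofReal_mul (by positivity), ← ENNReal.ofReal_mul (by positivity),
      ← ENNReal.ofReal_mul (by positivity)]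
    congr 1
    rw [Real.rpow_sub hε, Real.rpow_add hε, Real.mul_rpow (by norm_num) hε.le]
    have := Real.rpow_pos_of_pos hε s
    have := Real.rpow_pos_of_pos hε p
    field_simp
  calc ENNReal.ofReal ε ^ (s + s - p) = t⁻¹ * (ENNReal.ofReal ε ^ (s + s - p) * t) := by
        rw [mul_comm _ t, ← mul_assoc, ENNReal.inv_mul_cancel ht ht', one_mul]
    _ ≤ t⁻¹ * (ENNReal.ofReal ε ^ (s + s - p) * (ENNReal.ofReal ((c * ε ^ s)⁻¹) *
        ENNReal.ofReal ((c * ε ^ s)⁻¹) * (ENNReal.ofReal (2 * ε) ^ p * E))) := by gcongr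
    _ = _ := by
        rw [← h2]; ring

/-- Average Lebesgue points of fractional Sobolev functions: the set of points where
the double averages do not tend to `0` is `H^{s-rq}`-null. -/
theorem statement1 {X Y : Type*} [MetricSpace X] [MeasurableSpace X] [BorelSpace X]
    [MetricSpace Y] [MeasurableSpace Y] [BorelSpace Y]
    (μ : Measure X) (s r q : ℝ) (hs : 0 < s)
    (hμ : IsAhlfors μ s) (hr0 : 0 < r) (hr1 : r < 1) (hq : 0 < q) (hrq : r * q ≤ s)
    (u : X → Y) (hu : MemFracSobolevLoc μ r q s u) :
    μH[s - r * q] {x : X |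
      0 < limsup (fun ε : ℝ =>
        doubleAvg μ (fun z y => edist (u z) (u y) ^ q) x ε) (𝓝[>] (0 : ℝ))} = 0 := by
  rcases subsingleton_or_nontrivial X with hX | hX
  · have hz : ∀ x ε, doubleAvg μ (fun z y => edist (u z) (u y) ^ q) x ε = 0 := by
      intro x ε
      have : ∀ z y : X, edist (u z) (u y) ^ q = 0 := by
        intro z y
        rw [Subsingleton.elim z y]; simp [hq]
      simp [doubleAvg, this]
    simp [hz]
  obtain ⟨c, C, hc, hC, hreg⟩ := hμ
  obtain ⟨-, -, hen⟩ := hu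
  obtain ⟨x0⟩ : Nonempty X := inferInstance
  have hp : 0 < r * q + s := by positivity
  have hdiam : 0 < EMetric.diam (Set.univ : Set X) := by
    obtain ⟨a, b, hab⟩ := exists_pair_ne X
    exact (edist_pos.2 hab).trans_le (Metric.edist_le_ediam_of_mem (mem_univ a) (mem_univ b))
  obtain ⟨δ, hδ0, hδ⟩ : ∃ δ : ℝ, 0 < δ ∧ ENNReal.ofReal δ < EMetric.diam (Set.univ : Set X) := by
    obtain ⟨a, ha0, ha⟩ := exists_between hdiam
    have hat : a ≠ ⊤ := ne_top_of_lt ha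
    exact ⟨a.toReal, ENNReal.toReal_pos ha0.ne' hat, by rwa [ENNReal.ofReal_toReal hat]⟩
  set S : ℕ → ℕ → Set X := fun k m => {x : X | dist x x0 ≤ m ∧
    ((k : ℝ≥0∞) + 1)⁻¹ < limsup (fun ε : ℝ =>
        doubleAvg μ (fun z y => edist (u z) (u y) ^ q) x ε) (𝓝[>] (0 : ℝ))} with hS
  have hcover : {x : X | 0 < limsup (fun ε : ℝ =>
        doubleAvg μ (fun z y => edist (u z) (u y) ^ q) x ε) (𝓝[>] (0 : ℝ))} ⊆
        ⋃ k, ⋃ m, S k m := by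
    intro x hx
    obtain ⟨k, hk⟩ := ENNReal.exists_inv_nat_lt (ne_of_gt hx)
    obtain ⟨m, hm⟩ := exists_nat_ge (dist x x0)
    refine mem_iUnion.2 ⟨k, mem_iUnion.2 ⟨m, hm, lt_of_le_of_lt ?_ hk⟩⟩
    exact ENNReal.inv_le_inv.2 le_self_add
  refine measure_mono_null hcover (measure_iUnion_null fun k => measure_iUnion_null fun m => ?_)
  set B := closedBall x0 ((m : ℝ) + 1) with hB
  set t : ℝ≥0∞ := ((k : ℝ≥0∞) + 1)⁻¹ with ht
  have ht0 : t ≠ 0 := by simp [ht]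
  have htt : t ≠ ⊤ := by simp [ht]
  have hG0 : ∫⁻ z in B, truncEnergy μ q (r * q + s) u B 0 z ∂μ < ⊤ := by
    refine lt_of_le_of_lt (lintegral_mono fun z => ?_) (hen x0 ((m : ℝ) + 1) (by positivity))
    exact setLIntegral_le_lintegral _ _
  have hanti := truncEnergy_anti μ q (r * q + s) u B
  have hun : ∀ n, ((μ.restrict B).withDensity (truncEnergy μ q (r * q + s) u B n)) univ =
      ∫⁻ z in B, truncEnergy μ q (r * q + s) u B n z ∂μ := by
    intro n
    rw [withDensity_apply _ MeasurableSet.univ, Measure.restrict_univ]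
  refine covering_null (s - r * q) (by linarith) _
    (fun n => (μ.restrict B).withDensity (truncEnergy μ q (r * q + s) u B n)) ?_ ?_
    (t⁻¹ * ENNReal.ofReal (c⁻¹ * c⁻¹ * 2 ^ (r * q + s)))
    (ENNReal.mul_ne_top (ENNReal.inv_ne_top.2 ht0) ENNReal.ofReal_ne_top) ?_
  · intro n
    rw [hun]
    exact (lintegral_mono (hanti (Nat.zero_le n))).trans_lt hG0
  · simp_rw [hun]
    exact lower_dct _ _ hanti (truncEnergy_iInf μ q _ hq u B) hG0
  · rintro n x ⟨hxm, hxl⟩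
    have hfr := frequently_lt_of_lt_limsup (by isBoundedDefault) hxl
    have hev : ∀ᶠ ε : ℝ in 𝓝[>] (0 : ℝ), ε ∈ Ioo (0 : ℝ) (min δ (1 / ((n : ℝ) + 1))) :=
      Ioo_mem_nhdsGT (lt_min hδ0 (by positivity))
    obtain ⟨ε, hlt, hε0, hε1⟩ := (hfr.and_eventually hev).exists
    have hεδ := hε1.le.trans (min_le_left _ _)
    have hεn := hε1.le.trans (min_le_right _ _)
    have hn1 : 1 / ((n : ℝ) + 1) ≤ 1 := by
      rw [div_le_one (by positivity)]; linarith [Nat.cast_nonneg (α := ℝ) n]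
    refine ⟨ε, hε0, hεn, ?_⟩
    have hb := avg_bound μ q (r * q + s) s c hq hp hc u B measurableSet_closedBall n x ε hε0 hεn
      (closedBall_subset_closedBall' (by linarith))
      (hreg x ε hε0 (lt_of_le_of_lt (ENNReal.ofReal_le_ofReal hεδ) hδ)).1 t ht0 htt hlt
    rwa [show s + s - (r * q + s) = s - r * q by ring] at hb
end

section
/- Let X be a metric space, μ an Ahlfors s-regular Borel measure on X for some s ∈ (0,∞), (Y,ρ) a complete metric space, 0 ≤ r ≤ 1 and 0 < q < ∞ with rq ≤ s, and u ∈ B^r_{q,∞}(X,μ;Y). Then there exists a set Θ ⊂ X with Hausdorff dimension at most s − rq such that every point x ∈ X \ Θ is a Lebesgue point of u, i.e. there exists u*(x) ∈ Y with lim_{ε→0⁺} ⨍_{B_ε(x)} ρ(u(z),u*(x))^q dμ(z) = 0. -/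
open MeasureTheory Metric Filter Set
open scoped ENNReal Topology

/-- `u ∈ B^r_{q,∞}(X,μ;Y)`. -/
def MemBesov {X Y : Type*} [MetricSpace X] [MeasurableSpace X] [MetricSpace Y]
    [MeasurableSpace Y] [BorelSpace Y]
    (μ : Measure X) (r q : ℝ) (u : X → Y) : Prop :=
  Measurable u ∧
  (∀ (x : X) (R : ℝ), 0 < R →
    ∫⁻ z in closedBall x R, ∫⁻ y in closedBall x R, edist (u z) (u y) ^ q ∂μ ∂μ < ⊤) ∧
  (⨆ (t : ℝ) (_ : 0 < t),
    ∫⁻ x, (ENNReal.ofReal t ^ (r * q))⁻¹ *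
      ((μ (closedBall x t))⁻¹ * ∫⁻ z in closedBall x t, edist (u x) (u z) ^ q ∂μ) ∂μ) < ⊤


/-- double integral of the oscillation on a ball -/
noncomputable def dblOsc {X Y : Type*} [MetricSpace X] [MeasurableSpace X] [MetricSpace Y]
    (μ : Measure X) (q : ℝ) (u : X → Y) (x : X) (t : ℝ) : ℝ≥0∞ :=
  ∫⁻ z in closedBall x t, ∫⁻ y in closedBall x t, edist (u z) (u y) ^ q ∂μ ∂μ

lemma edist_rpow_le_aux {Y : Type*} [MetricSpace Y] {q : ℝ} (hq : 0 < q) (a b c : Y) :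
    edist a b ^ q ≤ ENNReal.ofReal (2 ^ q) * (edist c a ^ q + edist c b ^ q) := by
  have h1 : edist a b ≤ 2 * max (edist c a) (edist c b) := by
    calc edist a b ≤ edist c a + edist c b := edist_triangle_left a b c
      _ ≤ max (edist c a) (edist c b) + max (edist c a) (edist c b) :=
        add_le_add (le_max_left _ _) (le_max_right _ _)
      _ = _ := by rw [two_mul]
  have h2 : ENNReal.ofReal (2 ^ q) = (2 : ℝ≥0∞) ^ q := by
    rw [← ENNReal.ofReal_rpow_of_pos (by norm_num)]; simp
  rw [h2]
  calc edist a b ^ q ≤ (2 * max (edist c a) (edist c b)) ^ q :=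
        ENNReal.rpow_le_rpow h1 hq.le
    _ = 2 ^ q * (max (edist c a) (edist c b)) ^ q := ENNReal.mul_rpow_of_nonneg _ _ hq.le
    _ ≤ _ := by
      gcongr
      rcases le_total (edist c a) (edist c b) with h | h
      · rw [max_eq_right h]; exact le_add_self
      · rw [max_eq_left h]; exact le_self_add

section
variable {X Y : Type*} [MetricSpace X] [MeasurableSpace X] [BorelSpace X]
    [MetricSpace Y] [MeasurableSpace Y] [BorelSpace Y]

lemma measurable_edist_rpow_aux {q : ℝ} {u : X → Y} (hu : Measurable u) (a : Y) :
    Measurable (fun z => edist (u z) a ^ q) :=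
  (((continuous_id.edist continuous_const).measurable).comp hu).pow_const q

lemma const_bound_aux (μ : Measure X) {q : ℝ} (hq : 0 < q) {u : X → Y} (hu : Measurable u)
    (B : Set X) (a b : Y) :
    edist a b ^ q * μ B ≤ ENNReal.ofReal (2 ^ q) *
      (∫⁻ z in B, edist (u z) a ^ q ∂μ + ∫⁻ z in B, edist (u z) b ^ q ∂μ) := by
  rw [← setLIntegral_const, ← lintegral_add_left (measurable_edist_rpow_aux hu a),
    ← lintegral_const_mul' _ _ ENNReal.ofReal_ne_top]
  exact lintegral_mono fun z => edist_rpow_le_aux hq a b (u z)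

lemma int_bound_aux (μ : Measure X) {q : ℝ} (hq : 0 < q) {u : X → Y} (hu : Measurable u)
    (B : Set X) (a b : Y) :
    ∫⁻ z in B, edist (u z) b ^ q ∂μ ≤ ENNReal.ofReal (2 ^ q) *
      (∫⁻ z in B, edist (u z) a ^ q ∂μ + edist a b ^ q * μ B) := by
  rw [← setLIntegral_const, ← lintegral_add_left (measurable_edist_rpow_aux hu a),
    ← lintegral_const_mul' _ _ ENNReal.ofReal_ne_top]
  refine lintegral_mono fun z => ?_
  have := edist_rpow_le_aux hq (u z) b a
  rwa [edist_comm a (u z)] at this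

/-- packing bound -/
lemma packing_aux {μ : Measure X} {s r q C M : ℝ} (hC : 0 < C) (hM : 0 ≤ M)
    {u : X → Y} {ρ η : ℝ} (hρ : 0 < ρ)
    (hball : ∀ x : X, μ (closedBall x (2 * ρ)) ≠ 0 ∧
      μ (closedBall x (2 * ρ)) ≤ ENNReal.ofReal (C * (2 * ρ) ^ s))
    (hB : ∫⁻ x, (ENNReal.ofReal (2 * ρ) ^ (r * q))⁻¹ *
      ((μ (closedBall x (2 * ρ)))⁻¹ *
        ∫⁻ z in closedBall x (2 * ρ), edist (u x) (u z) ^ q ∂μ) ∂μ ≤ ENNReal.ofReal M)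
    (F : Finset X) (hF : ∀ x ∈ F, ∀ y ∈ F, x ≠ y → 2 * ρ < dist x y)
    (hS : ∀ x ∈ F, ENNReal.ofReal (ρ ^ (2 * s + η)) < dblOsc μ q u x ρ) :
    (F.card : ℝ) ≤ (C * 2 ^ (s + r * q) * M) * ρ ^ (-(s - r * q + η)) := by
  have h2ρ : 0 < 2 * ρ := by positivity
  set f : X → ℝ≥0∞ := fun x => (ENNReal.ofReal (2 * ρ) ^ (r * q))⁻¹ *
      ((μ (closedBall x (2 * ρ)))⁻¹ *
        ∫⁻ z in closedBall x (2 * ρ), edist (u x) (u z) ^ q ∂μ) with hf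
  set K : ℝ≥0∞ := ENNReal.ofReal (C * (2 * ρ) ^ s) * ENNReal.ofReal (2 * ρ) ^ (r * q) with hK
  have hpow : ENNReal.ofReal (2 * ρ) ^ (r * q) = ENNReal.ofReal ((2 * ρ) ^ (r * q)) :=
    ENNReal.ofReal_rpow_of_pos h2ρ
  have hp0 : ENNReal.ofReal (2 * ρ) ^ (r * q) ≠ 0 := by
    rw [hpow]; simp only [ne_eq, ENNReal.ofReal_eq_zero, not_le]; positivity
  have hpt : ENNReal.ofReal (2 * ρ) ^ (r * q) ≠ ⊤ := by
    rw [hpow]; exact ENNReal.ofReal_ne_top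
  have hKt : K ≠ ⊤ := ENNReal.mul_ne_top ENNReal.ofReal_ne_top hpt
  have hJ : ∀ x, ∫⁻ z in closedBall x (2 * ρ), edist (u x) (u z) ^ q ∂μ ≤ K * f x := by
    intro x
    obtain ⟨h0, hle⟩ := hball x
    have hmt : μ (closedBall x (2 * ρ)) ≠ ⊤ := ne_top_of_le_ne_top ENNReal.ofReal_ne_top hle
    set J := ∫⁻ z in closedBall x (2 * ρ), edist (u x) (u z) ^ q ∂μ
    set m := μ (closedBall x (2 * ρ))
    set p := ENNReal.ofReal (2 * ρ) ^ (r * q)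
    calc J = (m * m⁻¹) * (p * p⁻¹) * J := by
          rw [ENNReal.mul_inv_cancel h0 hmt, ENNReal.mul_inv_cancel hp0 hpt]; simp
      _ = m * p * (p⁻¹ * (m⁻¹ * J)) := by ring
      _ ≤ K * f x := by
        simp only [hK, hf]
        gcongr
  have hdisj : (F : Set X).PairwiseDisjoint (fun x => closedBall x ρ) := by
    intro x hx y hy hxy
    refine Set.disjoint_left.2 fun z hz1 hz2 => ?_
    have h1 := hF x hx y hy hxy
    rw [mem_closedBall] at hz1 hz2
    have := dist_triangle_left x y z
    linarith
  have hsum : ∑ x ∈ F, dblOsc μ q u x ρ ≤ K * ENNReal.ofReal M := by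
    calc ∑ x ∈ F, dblOsc μ q u x ρ ≤ ∑ x ∈ F, ∫⁻ z in closedBall x ρ, K * f z ∂μ := by
          refine Finset.sum_le_sum fun x _ => ?_
          refine setLIntegral_mono' measurableSet_closedBall fun z hz => ?_
          refine le_trans (lintegral_mono_set ?_) (hJ z)
          intro y hy
          rw [mem_closedBall] at *
          have := dist_triangle_right y z x
          linarith
      _ = ∫⁻ z in ⋃ x ∈ F, closedBall x ρ, K * f z ∂μ :=
          (lintegral_biUnion_finset hdisj (fun _ _ => measurableSet_closedBall) _).symm
      _ ≤ ∫⁻ z, K * f z ∂μ := setLIntegral_le_lintegral _ _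
      _ = K * ∫⁻ z, f z ∂μ := lintegral_const_mul' _ _ hKt
      _ ≤ _ := by gcongr
  have hcard : (F.card : ℝ≥0∞) * ENNReal.ofReal (ρ ^ (2 * s + η)) ≤ K * ENNReal.ofReal M := by
    refine le_trans ?_ hsum
    rw [← nsmul_eq_mul]
    exact Finset.card_nsmul_le_sum _ _ _ fun x hx => (hS x hx).le
  rw [hK, hpow, ← ENNReal.ofReal_mul (by positivity), ← ENNReal.ofReal_mul (by positivity),
    ← ENNReal.ofReal_natCast, ← ENNReal.ofReal_mul (by positivity),
    ENNReal.ofReal_le_ofReal_iff (by positivity)] at hcard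
  have e1 : (C * 2 ^ (s + r * q) * M) * ρ ^ (-(s - r * q + η)) * ρ ^ (2 * s + η)
      = C * (2 * ρ) ^ s * (2 * ρ) ^ (r * q) * M := by
    rw [Real.mul_rpow (by norm_num) hρ.le, Real.mul_rpow (by norm_num) hρ.le,
      mul_assoc _ (ρ ^ (-(s - r * q + η))), ← Real.rpow_add hρ, Real.rpow_add (by norm_num),
      show -(s - r * q + η) + (2 * s + η) = s + r * q by ring, Real.rpow_add hρ]
    ring
  rw [← e1] at hcard
  exact le_of_mul_le_mul_right hcard (by positivity)

/-- from packing bound to covering -/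
lemma cover_aux {S : Set X} {N : ℝ} {ρ : ℝ} (hρ : 0 < ρ)
    (h : ∀ F : Finset X, (∀ x ∈ F, x ∈ S) → (∀ x ∈ F, ∀ y ∈ F, x ≠ y → ρ < dist x y) →
      (F.card : ℝ) ≤ N) :
    ∃ F : Finset X, (F.card : ℝ) ≤ N ∧ S ⊆ ⋃ x ∈ F, closedBall x ρ := by
  classical
  by_contra! hcon
  have key : ∀ n : ℕ, ∃ F : Finset X, (∀ x ∈ F, x ∈ S) ∧
      (∀ x ∈ F, ∀ y ∈ F, x ≠ y → ρ < dist x y) ∧ F.card = n := by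
    intro n
    induction n with
    | zero => exact ⟨∅, by simp⟩
    | succ n ih =>
      obtain ⟨F, hFS, hsep, hc⟩ := ih
      have := hcon F (h F hFS hsep)
      obtain ⟨x, hxS, hx⟩ := Set.not_subset.1 this
      simp only [mem_iUnion, mem_closedBall, exists_prop, not_exists, not_and, not_le] at hx
      rcases Classical.em (x ∈ F) with hxF | hxF
      · have := hx x hxF
        simp at this; linarith
      refine ⟨insert x F, ?_, ?_, by rw [Finset.card_insert_of_notMem hxF, hc]⟩
      · intro y hy
        rcases Finset.mem_insert.1 hy with rfl | hy
        · exact hxS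
        · exact hFS y hy
      · intro y hy z hz hyz
        rcases Finset.mem_insert.1 hy with hy1 | hy1 <;>
          rcases Finset.mem_insert.1 hz with hz1 | hz1
        · exact absurd (hy1.trans hz1.symm) hyz
        · rw [hy1]; exact hx z hz1
        · rw [hz1, dist_comm]; exact hx y hy1
        · exact hsep y hy1 z hz1 hyz
  obtain ⟨n, hn⟩ := exists_nat_gt N
  obtain ⟨F, h1, h2, h3⟩ := key n
  have := h F h1 h2
  rw [h3] at this
  linarith

lemma dim_aux {S : ℕ → Set X} {K δ η : ℝ} (hK : 0 ≤ K) (hδ : 0 ≤ δ) (hη : 0 < η) (k₀ : ℕ)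
    (h : ∀ k ≥ k₀, ∃ F : Finset X, (F.card : ℝ) ≤ K * ((1 / 2 : ℝ) ^ k) ^ (-δ) ∧
      S k ⊆ ⋃ x ∈ F, closedBall x (2 * (1 / 2 : ℝ) ^ k)) :
    dimH {x | ∃ᶠ k in atTop, x ∈ S k} ≤ ENNReal.ofReal (δ + η) := by
  set d : ℝ := δ + η with hd
  have hd0 : 0 < d := by positivity
  have h' : ∀ k : ℕ, ∃ F : Finset X, k₀ ≤ k → ((F.card : ℝ) ≤ K * ((1 / 2 : ℝ) ^ k) ^ (-δ) ∧
      S k ⊆ ⋃ x ∈ F, closedBall x (2 * (1 / 2 : ℝ) ^ k)) := by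
    intro k
    by_cases hk : k₀ ≤ k
    · obtain ⟨F, hF⟩ := h k hk
      exact ⟨F, fun _ => hF⟩
    · exact ⟨∅, fun h => absurd h hk⟩
  choose F hF using h'
  have hdiam : ∀ (x : X) (k : ℕ), ediam (closedBall x (2 * (1 / 2 : ℝ) ^ k))
      ≤ ENNReal.ofReal (4 * (1 / 2 : ℝ) ^ k) := by
    intro x k
    refine ediam_le_of_forall_dist_le fun y hy z hz => ?_
    rw [mem_closedBall] at hy hz
    have := dist_triangle_right y z x
    linarith
  set β : ℝ := (1 / 2 : ℝ) ^ η with hβ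
  have hβ0 : 0 ≤ β := by positivity
  have hβ1 : β < 1 := Real.rpow_lt_one (by norm_num) (by norm_num) hη
  set Q : ℝ≥0∞ := ∑' k : ℕ, ENNReal.ofReal (K * 4 ^ d * β ^ k) with hQ
  have hQt : Q ≠ ⊤ := by
    have : Summable (fun k : ℕ => K * 4 ^ d * β ^ k) :=
      (summable_geometric_of_lt_one hβ0 hβ1).mul_left _
    rw [hQ, ← ENNReal.ofReal_tsum_of_nonneg (fun k => by positivity) this]
    exact ENNReal.ofReal_ne_top
  have hmeas : μH[d] {x | ∃ᶠ k in atTop, x ∈ S k} ≤ Q := by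
    refine le_trans (Measure.hausdorffMeasure_le_liminf_tsum (β := ℕ)
      (ι := fun m => Σ k : ℕ, {x // x ∈ F (k + m)}) d _ (l := atTop)
      (fun m => ENNReal.ofReal (4 * (1 / 2 : ℝ) ^ m)) ?_
      (fun m i => closedBall (i.2 : X) (2 * (1 / 2 : ℝ) ^ (i.1 + m))) ?_ ?_) ?_
    · have : Tendsto (fun m : ℕ => 4 * (1 / 2 : ℝ) ^ m) atTop (𝓝 (4 * 0)) :=
        (tendsto_pow_atTop_nhds_zero_of_lt_one (by norm_num) (by norm_num)).const_mul _
      have h2 := ENNReal.tendsto_ofReal this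
      simpa using h2
    · refine Eventually.of_forall fun m i => (hdiam _ _).trans (ENNReal.ofReal_le_ofReal ?_)
      have : (1 / 2 : ℝ) ^ (i.1 + m) ≤ (1 / 2 : ℝ) ^ m :=
        pow_le_pow_of_le_one (by norm_num) (by norm_num) (by omega)
      linarith
    · filter_upwards [eventually_ge_atTop k₀] with m hm x hx
      obtain ⟨k, hk, hxk⟩ := (frequently_atTop.1 hx) m
      have := (hF k (hm.trans hk)).2 hxk
      simp only [mem_iUnion, exists_prop] at this
      obtain ⟨y, hy, hxy⟩ := this
      obtain ⟨j, rfl⟩ := Nat.exists_eq_add_of_le' hk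
      exact mem_iUnion.2 ⟨⟨j, ⟨y, hy⟩⟩, hxy⟩
    · have hle : ∀ᶠ m : ℕ in atTop, (∑' i : Σ k : ℕ, {x // x ∈ F (k + m)},
          ediam (closedBall (i.2 : X) (2 * (1 / 2 : ℝ) ^ (i.1 + m))) ^ d) ≤ Q := by
        filter_upwards [eventually_ge_atTop k₀] with m hm
        rw [ENNReal.tsum_sigma']
        have : ∀ k : ℕ, (∑' x : {x // x ∈ F (k + m)},
            ediam (closedBall (x : X) (2 * (1 / 2 : ℝ) ^ (k + m))) ^ d)
              ≤ ENNReal.ofReal (K * 4 ^ d * β ^ k) := by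
          intro k
          set t : ℝ := (1 / 2 : ℝ) ^ (k + m) with ht
          have ht0 : 0 < t := by positivity
          calc (∑' x : {x // x ∈ F (k + m)}, ediam (closedBall (x : X) (2 * t)) ^ d)
              ≤ ∑' x : {x // x ∈ F (k + m)}, ENNReal.ofReal ((4 * t) ^ d) := by
                refine ENNReal.tsum_le_tsum fun x => ?_
                rw [← ENNReal.ofReal_rpow_of_pos (by positivity)]
                exact ENNReal.rpow_le_rpow (hdiam _ _) hd0.le
            _ = ENNReal.ofReal ((F (k + m)).card * (4 * t) ^ d) := by
                rw [tsum_fintype]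
                simp [ENNReal.ofReal_mul]
            _ ≤ _ := by
                refine ENNReal.ofReal_le_ofReal ?_
                calc ((F (k + m)).card : ℝ) * (4 * t) ^ d
                    ≤ (K * t ^ (-δ)) * (4 * t) ^ d := by
                      gcongr
                      exact (hF (k + m) (by omega)).1
                  _ = K * 4 ^ d * t ^ η := by
                      rw [Real.mul_rpow (by norm_num) ht0.le, hd, Real.rpow_add ht0,
                        Real.rpow_neg ht0.le]
                      field_simp
                  _ = K * 4 ^ d * β ^ (k + m) := by
                      rw [ht, hβ, ← Real.rpow_natCast, ← Real.rpow_natCast, ← Real.rpow_mul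
                        (by norm_num), ← Real.rpow_mul (by norm_num), mul_comm η]
                  _ ≤ _ := by
                      gcongr ?_ * ?_
                      exact pow_le_pow_of_le_one hβ0 hβ1.le (by omega)
        exact ENNReal.tsum_le_tsum this
      exact liminf_le_of_frequently_le' hle.frequently
  have := dimH_le_of_hausdorffMeasure_ne_top (X := X) (d := d.toNNReal)
    (s := {x | ∃ᶠ k in atTop, x ∈ S k}) (by
      rw [Real.coe_toNNReal _ hd0.le]; exact ne_top_of_le_ne_top hQt hmeas)
  exact this

lemma lebesgue_aux [CompleteSpace Y] {μ : Measure X} {s q c C η : ℝ}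
    (hs : 0 < s) (hq : 0 < q) (hc : 0 < c) (hC : 0 < C) (hη : 0 < η)
    {u : X → Y} (hu : Measurable u) (x : X) (k₀ : ℕ)
    (hball : ∀ ρ : ℝ, 0 < ρ → ρ ≤ (1 / 2 : ℝ) ^ k₀ →
      ENNReal.ofReal (c * ρ ^ s) ≤ μ (closedBall x ρ) ∧
      μ (closedBall x ρ) ≤ ENNReal.ofReal (C * ρ ^ s))
    (hA : ∀ k ≥ k₀, dblOsc μ q u x ((1 / 2 : ℝ) ^ k) ≤
      ENNReal.ofReal (((1 / 2 : ℝ) ^ k) ^ (2 * s + η))) :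
    ∃ ustar : Y,
        Tendsto (fun ε : ℝ =>
            (μ (closedBall x ε))⁻¹ * ∫⁻ z in closedBall x ε, edist (u z) ustar ^ q ∂μ)
          (𝓝[>] (0 : ℝ)) (𝓝 0) := by
  set t : ℕ → ℝ := fun k => (1 / 2 : ℝ) ^ k with ht
  have ht0 : ∀ k, 0 < t k := fun k => by simp only [ht]; positivity
  have htS : ∀ k, t (k + 1) = t k / 2 := fun k => by simp only [ht, pow_succ]; ring
  have hta : ∀ k j, k ≤ j → t j ≤ t k := fun k j h =>
    pow_le_pow_of_le_one (by norm_num) (by norm_num) h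
  -- good centers
  have hy : ∀ n : ℕ, ∃ a : Y, ∫⁻ z in closedBall x (t (n + k₀)), edist (u z) a ^ q ∂μ ≤
      ENNReal.ofReal (2 / c * t (n + k₀) ^ (s + η)) := by
    intro n
    by_contra! hcon
    set τ := t (n + k₀) with hτ
    have hτ0 : 0 < τ := ht0 _
    have h1 : ENNReal.ofReal (2 / c * τ ^ (s + η)) * μ (closedBall x τ) ≤ dblOsc μ q u x τ := by
      rw [← setLIntegral_const]
      refine lintegral_mono fun z => ?_
      refine (hcon (u z)).le.trans (le_of_eq ?_)
      simp only [edist_comm]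
    have h2 := (mul_le_mul_right (hball τ hτ0 (hta _ _ (by omega))).1
      (ENNReal.ofReal (2 / c * τ ^ (s + η)))).trans (h1.trans (hA _ (by omega)))
    rw [← ENNReal.ofReal_mul (by positivity), ENNReal.ofReal_le_ofReal_iff
      (Real.rpow_nonneg (by positivity) _)] at h2
    have e : 2 / c * τ ^ (s + η) * (c * τ ^ s) = 2 * τ ^ (2 * s + η) := by
      rw [show 2 * s + η = (s + η) + s by ring, Real.rpow_add hτ0 (s + η) s]
      field_simp
    rw [e] at h2
    have : 0 < τ ^ (2 * s + η) := by positivity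
    change 2 * τ ^ (2 * s + η) ≤ τ ^ (2 * s + η) at h2
    linarith
  choose y hy using hy
  set K3 : ℝ := 2 ^ q * (2 * (2 / c)) * 2 ^ s / c with hK3
  have hK3' : 0 < K3 := by positivity
  set β : ℝ := (1 / 2 : ℝ) ^ (η / q) with hβ
  have hβ0 : 0 < β := by positivity
  have hβ1 : β < 1 := Real.rpow_lt_one (by norm_num) (by norm_num) (by positivity)
  have hβt : ∀ k, (β ^ k) ^ q = t k ^ η := by
    intro k
    simp only [hβ, ht]
    rw [← Real.rpow_natCast, ← Real.rpow_natCast, ← Real.rpow_mul (by positivity),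
      ← Real.rpow_mul (by positivity), ← Real.rpow_mul (by positivity)]
    congr 1; field_simp
  set K4 : ℝ := K3 ^ (1 / q) with hK4
  have hK4' : 0 < K4 := by positivity
  have hstep : ∀ n, edist (y n) (y (n + 1)) ≤
      ENNReal.ofReal (K4 * β ^ k₀) * ENNReal.ofReal β ^ n := by
    intro n
    set τ := t (n + k₀) with hτ
    have hτ0 : 0 < τ := ht0 _
    have hτS : t (n + 1 + k₀) = τ / 2 := by
      rw [show n + 1 + k₀ = (n + k₀) + 1 by ring, htS]
    have hτ2 : τ / 2 ≤ τ := by linarith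
    have hy1 := hy (n + 1)
    rw [hτS] at hy1
    have hsub : closedBall x (τ / 2) ⊆ closedBall x τ := closedBall_subset_closedBall hτ2
    have hm := (hball (τ / 2) (by positivity) (hτ2.trans (hta _ _ (by omega)))).1
    have h1 := const_bound_aux μ hq hu (closedBall x (τ / 2)) (y n) (y (n + 1))
    have h2 : edist (y n) (y (n + 1)) ^ q * ENNReal.ofReal (c * (τ / 2) ^ s) ≤
        ENNReal.ofReal (2 ^ q * (2 * (2 / c)) * τ ^ (s + η)) := by
      calc _ ≤ edist (y n) (y (n + 1)) ^ q * μ (closedBall x (τ / 2)) := by gcongr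
        _ ≤ _ := h1
        _ ≤ ENNReal.ofReal (2 ^ q) * (ENNReal.ofReal (2 / c * τ ^ (s + η)) +
            ENNReal.ofReal (2 / c * τ ^ (s + η))) := by
          gcongr
          · exact (lintegral_mono_set hsub).trans (hy n)
          · refine hy1.trans (ENNReal.ofReal_le_ofReal ?_)
            gcongr
        _ = _ := by
          rw [← ENNReal.ofReal_add (by positivity) (by positivity),
            ← ENNReal.ofReal_mul (by positivity)]
          congr 1; ring
    have hpos : 0 < c * (τ / 2) ^ s := by positivity
    have h3 : edist (y n) (y (n + 1)) ^ q ≤ ENNReal.ofReal (K3 * τ ^ η) := by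
      have := (ENNReal.le_div_iff_mul_le (Or.inl (by simpa using hpos))
        (Or.inl ENNReal.ofReal_ne_top)).2 h2
      rw [← ENNReal.ofReal_div_of_pos hpos] at this
      refine this.trans (le_of_eq ?_)
      congr 1
      rw [hK3, Real.div_rpow hτ0.le (by norm_num), Real.rpow_add hτ0]
      field_simp
    have h4 : edist (y n) (y (n + 1)) ≤ ENNReal.ofReal (K4 * β ^ (n + k₀)) := by
      rw [← ENNReal.rpow_le_rpow_iff hq, ENNReal.ofReal_rpow_of_pos (by positivity),
        Real.mul_rpow hK4'.le (by positivity), hβt, hK4, ← Real.rpow_mul hK3'.le]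
      rw [one_div_mul_cancel hq.ne', Real.rpow_one]
      exact h3
    refine h4.trans (le_of_eq ?_)
    rw [← ENNReal.ofReal_pow hβ0.le, ← ENNReal.ofReal_mul (by positivity)]
    congr 1; ring
  have hβE : ENNReal.ofReal β < 1 := by
    rw [← ENNReal.ofReal_one]; exact (ENNReal.ofReal_lt_ofReal_iff one_pos).2 hβ1
  have hcau := cauchySeq_of_edist_le_geometric _ _ hβE ENNReal.ofReal_ne_top hstep
  obtain ⟨a, ha⟩ := cauchySeq_tendsto_of_complete hcau
  have hdist := edist_le_of_edist_le_geometric_of_tendsto _ _ hstep ha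
  refine ⟨a, ?_⟩
  set K5 : ℝ := (K4 / (1 - β)) ^ q with hK5
  have h1β : 0 < 1 - β := by linarith
  have hdist2 : ∀ n, edist (y n) a ^ q ≤ ENNReal.ofReal (K5 * t (n + k₀) ^ η) := by
    intro n
    have h := hdist n
    have e : ENNReal.ofReal (K4 * β ^ k₀) * ENNReal.ofReal β ^ n / (1 - ENNReal.ofReal β) =
        ENNReal.ofReal (K4 / (1 - β) * β ^ (n + k₀)) := by
      rw [← ENNReal.ofReal_one, ← ENNReal.ofReal_sub _ hβ0.le, ← ENNReal.ofReal_pow hβ0.le,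
        ← ENNReal.ofReal_mul (by positivity), ← ENNReal.ofReal_div_of_pos h1β]
      congr 1; rw [pow_add]; ring
    rw [e] at h
    have := ENNReal.rpow_le_rpow h hq.le
    rwa [ENNReal.ofReal_rpow_of_pos (by positivity), Real.mul_rpow (by positivity)
      (by positivity), hβt] at this
  set K6 : ℝ := 2 ^ q * (2 / c + K5 * C) with hK6
  have hK5' : 0 < K5 := by positivity
  have hfin : ∀ k ≥ k₀, ∫⁻ z in closedBall x (t k), edist (u z) a ^ q ∂μ ≤
      ENNReal.ofReal (K6 * t k ^ (s + η)) := by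
    intro k hk
    obtain ⟨n, rfl⟩ := Nat.exists_eq_add_of_le' hk
    have hτ0 := ht0 (n + k₀)
    refine (int_bound_aux μ hq hu _ (y n) a).trans ?_
    calc _ ≤ ENNReal.ofReal (2 ^ q) * (ENNReal.ofReal (2 / c * t (n + k₀) ^ (s + η)) +
          ENNReal.ofReal (K5 * t (n + k₀) ^ η) * ENNReal.ofReal (C * t (n + k₀) ^ s)) := by
          gcongr
          · exact hy n
          · exact hdist2 n
          · exact (hball _ hτ0 (hta _ _ hk)).2
      _ = _ := by
          rw [← ENNReal.ofReal_mul (by positivity), ← ENNReal.ofReal_add (by positivity)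
            (by positivity), ← ENNReal.ofReal_mul (by positivity)]
          congr 1
          rw [hK6, Real.rpow_add hτ0]; ring
  have hK6' : 0 < K6 := by positivity
  set K7 : ℝ := K6 * 2 ^ (s + η) / c with hK7
  have hbound : ∀ᶠ ε : ℝ in 𝓝[>] (0 : ℝ),
      (μ (closedBall x ε))⁻¹ * ∫⁻ z in closedBall x ε, edist (u z) a ^ q ∂μ ≤
        ENNReal.ofReal (K7 * ε ^ η) := by
    have hIoc : Ioc (0 : ℝ) (t k₀) ∈ 𝓝[>] (0 : ℝ) := Ioc_mem_nhdsGT (ht0 _)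
    filter_upwards [hIoc] with ε hε
    have hε1 : ε ≤ 1 := hε.2.trans (by simpa [ht] using hta 0 k₀ (Nat.zero_le _))
    obtain ⟨k, hk1, hk2⟩ := exists_nat_pow_near_of_lt_one hε.1 hε1
      (show (0 : ℝ) < 1 / 2 by norm_num) (by norm_num)
    change t (k + 1) < ε at hk1
    change ε ≤ t k at hk2
    have hk : k₀ ≤ k := by
      by_contra! hlt
      have := hta (k + 1) k₀ hlt
      linarith [hε.2]
    have hε0 : 0 < ε := hε.1
    have hpos : 0 < c * ε ^ s := by positivity
    have htk : t k ≤ 2 * ε := by have := htS k; linarith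
    calc _ ≤ (ENNReal.ofReal (c * ε ^ s))⁻¹ * ENNReal.ofReal (K6 * t k ^ (s + η)) := by
          gcongr
          · exact (hball ε hε0 hε.2).1
          · exact (lintegral_mono_set (closedBall_subset_closedBall hk2)).trans (hfin k hk)
      _ = ENNReal.ofReal (K6 * t k ^ (s + η) / (c * ε ^ s)) := by
          rw [ENNReal.ofReal_div_of_pos hpos, ENNReal.div_eq_inv_mul]
      _ ≤ ENNReal.ofReal (K6 * (2 * ε) ^ (s + η) / (c * ε ^ s)) := by
          have := ht0 k
          gcongr
      _ = _ := by
          congr 1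
          rw [hK7, Real.mul_rpow (by norm_num) hε0.le, Real.rpow_add hε0]
          field_simp
  have hlim : Tendsto (fun ε : ℝ => ENNReal.ofReal (K7 * ε ^ η)) (𝓝[>] (0 : ℝ)) (𝓝 0) := by
    have h1 : Tendsto (fun ε : ℝ => K7 * ε ^ η) (𝓝[>] (0 : ℝ)) (𝓝 (K7 * 0 ^ η)) :=
      ((Real.continuousAt_rpow_const 0 η (Or.inr hη.le)).tendsto.mono_left
        nhdsWithin_le_nhds).const_mul _
    rw [Real.zero_rpow hη.ne', mul_zero] at h1
    simpa using ENNReal.tendsto_ofReal h1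
  exact tendsto_of_tendsto_of_tendsto_of_le_of_le' tendsto_const_nhds hlim
    (Eventually.of_forall fun _ => zero_le) hbound

end

/-- Lebesgue points of Besov functions with complete target: outside a set `Θ` of
Hausdorff dimension at most `s - rq`, every point is a Lebesgue point of `u`. -/
theorem statement2 {X Y : Type*} [MetricSpace X] [MeasurableSpace X] [BorelSpace X]
    [MetricSpace Y] [MeasurableSpace Y] [BorelSpace Y] [CompleteSpace Y]
    (μ : Measure X) (s r q : ℝ) (hs : 0 < s)
    (hμ : IsAhlfors μ s) (hr0 : 0 ≤ r) (hr1 : r ≤ 1) (hq : 0 < q) (hrq : r * q ≤ s)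
    (u : X → Y) (hu : MemBesov μ r q u) :
    ∃ Θ : Set X, dimH Θ ≤ ENNReal.ofReal (s - r * q) ∧
      ∀ x ∉ Θ, ∃ ustar : Y,
        Tendsto (fun ε : ℝ =>
            (μ (closedBall x ε))⁻¹ * ∫⁻ z in closedBall x ε, edist (u z) ustar ^ q ∂μ)
          (𝓝[>] (0 : ℝ)) (𝓝 0) := by
  obtain ⟨c, C, hc, hC, hball⟩ := hμ
  obtain ⟨hum, -, hB⟩ := hu
  rcases subsingleton_or_nontrivial X with hX | hX
  · refine ⟨∅, by simp, fun x _ => ⟨u x, ?_⟩⟩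
    have : ∀ z, u z = u x := fun z => by rw [Subsingleton.elim z x]
    simp [this, hq]
  have hD : 0 < ediam (Set.univ : Set X) := ediam_pos_iff.2 Set.nontrivial_univ
  -- a scale below which everything is regular
  have hsmall : ∃ k₀ : ℕ, ENNReal.ofReal (2 * (1 / 2 : ℝ) ^ k₀) < ediam (Set.univ : Set X) := by
    have h1 : Tendsto (fun m : ℕ => 2 * (1 / 2 : ℝ) ^ m) atTop (𝓝 (2 * 0)) :=
      (tendsto_pow_atTop_nhds_zero_of_lt_one (by norm_num) (by norm_num)).const_mul _
    have h2 := ENNReal.tendsto_ofReal h1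
    simp only [mul_zero, ENNReal.ofReal_zero] at h2
    exact (h2.eventually_lt_const hD).exists
  obtain ⟨k₀, hk₀⟩ := hsmall
  have hreg : ∀ (x : X) (ρ : ℝ), 0 < ρ → ρ ≤ 2 * (1 / 2 : ℝ) ^ k₀ →
      ENNReal.ofReal (c * ρ ^ s) ≤ μ (closedBall x ρ) ∧
      μ (closedBall x ρ) ≤ ENNReal.ofReal (C * ρ ^ s) := fun x ρ h0 h1 =>
    hball x ρ h0 ((ENNReal.ofReal_le_ofReal h1).trans_lt hk₀)
  have hpa : ∀ k j : ℕ, k ≤ j → (1 / 2 : ℝ) ^ j ≤ (1 / 2 : ℝ) ^ k := fun k j h =>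
    pow_le_pow_of_le_one (by norm_num) (by norm_num) h
  set M := (⨆ (t : ℝ) (_ : 0 < t),
    ∫⁻ x, (ENNReal.ofReal t ^ (r * q))⁻¹ *
      ((μ (closedBall x t))⁻¹ * ∫⁻ z in closedBall x t, edist (u x) (u z) ^ q ∂μ) ∂μ) with hM
  have hMle : ∀ t : ℝ, 0 < t → ∫⁻ x, (ENNReal.ofReal t ^ (r * q))⁻¹ *
      ((μ (closedBall x t))⁻¹ * ∫⁻ z in closedBall x t, edist (u x) (u z) ^ q ∂μ) ∂μ
        ≤ ENNReal.ofReal M.toReal := by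
    intro t ht
    rw [ENNReal.ofReal_toReal hB.ne, hM]
    exact le_iSup₂_of_le t ht le_rfl
  set S : ℝ → ℕ → Set X := fun η k =>
    {x | ENNReal.ofReal (((1 / 2 : ℝ) ^ k) ^ (2 * s + η)) < dblOsc μ q u x ((1 / 2 : ℝ) ^ k)}
    with hS
  set T : ℝ → Set X := fun η => {x | ∃ᶠ k in atTop, x ∈ S η k} with hT
  have hdim : ∀ η : ℝ, 0 < η → dimH (T η) ≤ ENNReal.ofReal (s - r * q + 2 * η) := by
    intro η hη
    have := dim_aux (S := S η) (K := C * 2 ^ (s + r * q) * M.toReal) (δ := s - r * q + η)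
      (by positivity) (by linarith) hη k₀ (by
        intro k hk
        refine cover_aux (by positivity) fun F hFS hsep => ?_
        have hle : 2 * (1 / 2 : ℝ) ^ k ≤ 2 * (1 / 2 : ℝ) ^ k₀ := by
          have := hpa _ _ hk; linarith
        refine packing_aux hC ENNReal.toReal_nonneg (by positivity) (fun x => ?_)
          (hMle _ (by positivity)) F hsep hFS
        have h := hreg x (2 * (1 / 2 : ℝ) ^ k) (by positivity) hle
        refine ⟨?_, h.2⟩
        refine (lt_of_lt_of_le ?_ h.1).ne'
        rw [ENNReal.ofReal_pos]; positivity)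
    rwa [show s - r * q + 2 * η = s - r * q + η + η by ring]
  refine ⟨⋂ n : ℕ, T (1 / ((n : ℝ) + 1)), ?_, ?_⟩
  · have h1 : Tendsto (fun n : ℕ => s - r * q + 2 * (1 / ((n : ℝ) + 1))) atTop
        (𝓝 (s - r * q + 2 * 0)) :=
      (tendsto_one_div_add_atTop_nhds_zero_nat.const_mul 2).const_add _
    have h2 := ENNReal.tendsto_ofReal h1
    rw [mul_zero, add_zero] at h2
    exact ge_of_tendsto' h2 fun n =>
      (dimH_mono (Set.iInter_subset _ n)).trans (hdim _ (by positivity))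
  · intro x hx
    simp only [Set.mem_iInter, not_forall] at hx
    obtain ⟨n, hn⟩ := hx
    simp only [hT, hS, Set.mem_setOf_eq, not_frequently, not_lt] at hn
    obtain ⟨k₁, hk₁⟩ := eventually_atTop.1 hn
    refine lebesgue_aux hs hq hc hC (η := 1 / ((n : ℝ) + 1)) (by positivity) hum x (max k₀ k₁)
      (fun ρ h0 h1 => hreg x ρ h0 (h1.trans ?_)) (fun k hk => hk₁ k (le_trans (le_max_right _ _) hk))
    have := hpa k₀ (max k₀ k₁) (le_max_left _ _)
    have h3 : (0 : ℝ) < (1 / 2) ^ k₀ := by positivity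
    linarith
end

section
/- Let X be a metric space equipped with Carathéodory's construction from an admissible gauge ζ on the Borel sets, producing approximating measures φ_δ. Let Ω ⊂ X be an open set, μ a Borel measure on Ω, t ∈ (0,∞), and δ ∈ (0, min{I,γ}), where I and γ are the parameters in the admissibility conditions of ζ. Suppose A ⊂ { x ∈ Ω : sup_{0<ρ<δ, B_ρ(x)⊂Ω} μ(B_ρ(x))/ζ(B_ρ(x)) > t }. Then φ_{10δ}(A) ≤ (λ/t)·μ(Ω), where λ is the doubling constant of ζ. -/
open MeasureTheory Metric Filter Set
open scoped ENNReal Topology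

/-- The approximating measure `φ_δ` of Carathéodory's construction from the gauge `ζ`
and the family of all Borel subsets: the infimum of `Σ_{S ∈ G} ζ(S)` over countable
Borel covers `G` of `A` by sets of diameter at most `δ`. -/
noncomputable def caraPre {X : Type*} [MetricSpace X] [MeasurableSpace X]
    (ζ : Set X → ℝ≥0∞) (δ : ℝ) (A : Set X) : ℝ≥0∞ :=
  ⨅ (G : Set (Set X)) (_ : G.Countable) (_ : ∀ S ∈ G, MeasurableSet S)
    (_ : ∀ S ∈ G, EMetric.diam S ≤ ENNReal.ofReal δ) (_ : A ⊆ ⋃₀ G),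
    ∑' S : G, ζ S.1

/-- A density-type estimate for the approximating measure `φ_{10δ}`: if at every point
of `A ⊆ Ω` some ball of radius `< δ` contained in `Ω` satisfies `μ(B)/ζ(B) > t`, then
`φ_{10δ}(A) ≤ (λ/t) μ(Ω)`. -/
theorem statement3 {X : Type*} [MetricSpace X] [MeasurableSpace X] [BorelSpace X]
    (ζ : Set X → ℝ≥0∞) (I γ lam : ℝ≥0∞) (hI : 0 < I) (hγ : 0 < γ)
    (hlam : 0 < lam) (hlamtop : lam ≠ ⊤)
    (hζfin : ∀ (x : X) (R : ℝ), 0 < R → ENNReal.ofReal R < I →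
      0 < ζ (closedBall x R) ∧ ζ (closedBall x R) < ⊤)
    (hζdbl : ∀ (x : X) (R : ℝ), 0 < R → ENNReal.ofReal R < γ →
      ζ (closedBall x (5 * R)) ≤ lam * ζ (closedBall x R))
    (Ω : Set X) (hΩ : IsOpen Ω) (μ : Measure X)
    (t : ℝ≥0∞) (ht : 0 < t) (httop : t ≠ ⊤)
    (δ : ℝ) (hδ : 0 < δ) (hδI : ENNReal.ofReal δ < min I γ)
    (A : Set X)
    (hA : A ⊆ {x ∈ Ω | ∃ ρ : ℝ, 0 < ρ ∧ ρ < δ ∧ closedBall x ρ ⊆ Ω ∧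
      t < μ (closedBall x ρ) / ζ (closedBall x ρ)}) :
    caraPre ζ (10 * δ) A ≤ (lam / t) * μ Ω := by
  by_cases hfin : μ Ω = ⊤
  · have : lam / t ≠ 0 := by
      simp [ENNReal.div_eq_zero_iff, hlam.ne', httop]
    rw [hfin, ENNReal.mul_top this]
    exact le_top
  have hA' : ∀ a : A, ∃ ρ : ℝ, 0 < ρ ∧ ρ < δ ∧ closedBall a.1 ρ ⊆ Ω ∧
      t < μ (closedBall a.1 ρ) / ζ (closedBall a.1 ρ) := fun a => (hA a.2).2
  choose r hr0 hrδ hrΩ hrt using hA'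
  have hofr : ∀ a, ENNReal.ofReal (r a) < min I γ := fun a =>
    lt_of_le_of_lt (ENNReal.ofReal_le_ofReal (hrδ a).le) hδI
  have hζa : ∀ a, 0 < ζ (closedBall a.1 (r a)) ∧ ζ (closedBall a.1 (r a)) < ⊤ := fun a =>
    hζfin a.1 (r a) (hr0 a) (lt_of_lt_of_le (hofr a) (min_le_left _ _))
  have hkey : ∀ a, t * ζ (closedBall a.1 (r a)) ≤ μ (closedBall a.1 (r a)) := fun a =>
    (ENNReal.le_div_iff_mul_le (Or.inl (hζa a).1.ne') (Or.inl (hζa a).2.ne)).1 (hrt a).le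
  have hpos : ∀ a, 0 < μ (closedBall a.1 (r a)) := fun a =>
    lt_of_lt_of_le (ENNReal.mul_pos ht.ne' (hζa a).1.ne') (hkey a)
  obtain ⟨u, -, hdisj, hcov⟩ :=
    Vitali.exists_disjoint_subfamily_covering_enlargement_closedBall
      (univ : Set A) (fun a => a.1) r δ (fun a _ => (hrδ a).le) 5 (by norm_num)
  have hdisj' : Pairwise (Function.onFun Disjoint
      (fun a : u => closedBall a.1.1 (r a.1))) := by
    intro a b hab
    exact hdisj a.2 b.2 (fun h => hab (Subtype.ext h))
  haveI : IsFiniteMeasure (μ.restrict Ω) :=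
    ⟨by simpa using lt_top_iff_ne_top.2 hfin⟩
  have hres : ∀ a, μ.restrict Ω (closedBall a.1 (r a)) = μ (closedBall a.1 (r a)) := fun a => by
    rw [Measure.restrict_apply isClosed_closedBall.measurableSet,
      inter_eq_self_of_subset_left (hrΩ a)]
  have hucount : Countable u := by
    have h := Measure.countable_meas_pos_of_disjoint_iUnion (μ := μ.restrict Ω)
      (As := fun a : u => closedBall a.1.1 (r a.1))
      (fun a => isClosed_closedBall.measurableSet) hdisj'
    have h2 : {i : u | 0 < μ.restrict Ω (closedBall i.1.1 (r i.1))} = univ := by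
      ext i
      simp only [mem_setOf_eq, mem_univ, iff_true]
      rw [hres]
      exact hpos _
    rw [h2] at h
    exact countable_univ_iff.1 h
  have hsum : ∑' a : u, μ (closedBall a.1.1 (r a.1)) ≤ μ Ω := by
    rw [← measure_iUnion hdisj' (fun a => isClosed_closedBall.measurableSet)]
    exact measure_mono (iUnion_subset fun a => hrΩ a.1)
  let f : u → Set X := fun a => closedBall a.1.1 (5 * r a.1)
  have h1 : caraPre ζ (10 * δ) A ≤ ∑' S : range f, ζ S.1 := by
    unfold caraPre
    refine iInf_le_of_le (range f) (iInf_le_of_le (countable_range f)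
      (iInf_le_of_le ?_ (iInf_le_of_le ?_ (iInf_le_of_le ?_ le_rfl))))
    · rintro _ ⟨a, rfl⟩
      exact isClosed_closedBall.measurableSet
    · rintro _ ⟨a, rfl⟩
      refine Metric.ediam_le_of_forall_dist_le ?_
      intro x hx y hy
      have h1 := mem_closedBall.1 hx
      have h2 := mem_closedBall.1 hy
      have h3 := dist_triangle_right x y a.1.1
      have := hrδ a.1
      linarith
    · intro x hx
      obtain ⟨b, hb, hsub⟩ := hcov ⟨x, hx⟩ (mem_univ _)
      exact ⟨f ⟨b, hb⟩, ⟨_, rfl⟩, hsub (mem_closedBall_self (hr0 _).le)⟩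
  have h2 : ∑' S : range f, ζ S.1 ≤ ∑' a : u, ζ (f a) := by
    have hg : ∀ S : range f, ∃ a, f a = S.1 := fun S => S.2
    choose g hg using hg
    have hinj : Function.Injective g := fun S T h => Subtype.ext (by rw [← hg S, ← hg T, h])
    calc ∑' S : range f, ζ S.1 = ∑' S : range f, ζ (f (g S)) := by simp only [hg]
      _ ≤ _ := ENNReal.tsum_comp_le_tsum_of_injective hinj (fun a => ζ (f a))
  refine h1.trans (h2.trans ?_)
  calc ∑' a : u, ζ (f a) ≤ ∑' a : u, (lam / t) * μ (closedBall a.1.1 (r a.1)) := by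
        refine ENNReal.tsum_le_tsum fun a => ?_
        refine (hζdbl a.1.1 (r a.1) (hr0 _)
          (lt_of_lt_of_le (hofr _) (min_le_right _ _))).trans ?_
        rw [div_eq_mul_inv, mul_assoc]
        gcongr
        rw [mul_comm, ← div_eq_mul_inv, ENNReal.le_div_iff_mul_le (Or.inl ht.ne') (Or.inl httop),
          mul_comm]
        exact hkey _
    _ = (lam / t) * ∑' a : u, μ (closedBall a.1.1 (r a.1)) := ENNReal.tsum_mul_left
    _ ≤ _ := by gcongr
end

section
/- Let X be a metric space equipped with Carathéodory's construction from an admissible gauge ζ on the Borel sets, producing the measure ψ, and let λ be the doubling constant of ζ. For each n ∈ ℕ let μ_n be a Borel measure on X, let t ∈ [0,∞), and let r_n be a sequence of positive numbers decreasing to 0. Suppose A ⊂ { x ∈ X : liminf_{n→∞} ( sup_{0<ρ<r_n} μ_n(B_ρ(x))/ζ(B_ρ(x)) ) ≥ t }. Then for every open set Ω containing A, λ · liminf_{n→∞} μ_n(Ω) ≥ t · ψ(A). -/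
open MeasureTheory Metric Filter Set
open scoped ENNReal Topology

/-- The resulting measure `ψ = lim_{δ→0⁺} φ_δ = sup_{δ>0} φ_δ` of Carathéodory's
construction. -/
noncomputable def caraMeas {X : Type*} [MetricSpace X] [MeasurableSpace X]
    (ζ : Set X → ℝ≥0∞) (A : Set X) : ℝ≥0∞ :=
  ⨆ (δ : ℝ) (_ : 0 < δ), caraPre ζ δ A


/-- The gauge restricted to measurable sets (infinite elsewhere). -/
noncomputable def gaugeM {X : Type*} [MeasurableSpace X] (ζ : Set X → ℝ≥0∞) (S : Set X) : ℝ≥0∞ :=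
  ⨅ _ : MeasurableSet S, ζ S

theorem caraPre_le_pre {X : Type*} [MetricSpace X] [MeasurableSpace X]
    (ζ : Set X → ℝ≥0∞) (δ : ℝ) (A : Set X) :
    caraPre ζ δ A ≤ OuterMeasure.mkMetric'.pre (gaugeM ζ) (ENNReal.ofReal δ) A := by
  unfold OuterMeasure.mkMetric'.pre
  rw [OuterMeasure.boundedBy_apply]
  refine le_iInf fun s => le_iInf fun hs => ?_
  by_cases htop : (∑' n, ⨆ _ : (s n).Nonempty,
      extend (fun S (_ : ediam S ≤ ENNReal.ofReal δ) => gaugeM ζ S) (s n)) = ⊤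
  · rw [htop]; exact le_top
  have key : ∀ n, (s n).Nonempty → ediam (s n) ≤ ENNReal.ofReal δ ∧ MeasurableSet (s n) := by
    intro n hn
    have h1 := ENNReal.ne_top_of_tsum_ne_top htop n
    rw [ciSup_pos hn] at h1
    constructor
    · by_contra hc
      exact h1 (by simp [extend, hc])
    · by_contra hc
      exact h1 (by simp [extend, gaugeM, hc])
  set G : Set (Set X) := s '' {n | (s n).Nonempty} with hG
  have hGc : G.Countable := (Set.to_countable _).image _
  have hchoice : ∀ S : G, ∃ n, (s n).Nonempty ∧ s n = S.1 := by
    rintro ⟨S, n, hn, rfl⟩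
    exact ⟨n, hn, rfl⟩
  choose f hf1 hf2 using hchoice
  have hinj : Function.Injective f := by
    intro a b hab
    apply Subtype.ext
    rw [← hf2 a, ← hf2 b, hab]
  unfold caraPre
  refine (iInf_le _ G).trans <| (iInf_le _ hGc).trans <| (iInf_le _ ?_).trans <|
    (iInf_le _ ?_).trans <| (iInf_le _ ?_).trans ?_
  · rintro S ⟨n, hn, rfl⟩
    exact (key n hn).2
  · rintro S ⟨n, hn, rfl⟩
    exact (key n hn).1
  · intro x hx
    obtain ⟨n, hn⟩ := mem_iUnion.1 (hs hx)
    exact ⟨s n, ⟨n, ⟨x, hn⟩, rfl⟩, hn⟩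
  · refine le_trans ?_ (ENNReal.tsum_comp_le_tsum_of_injective hinj _)
    refine ENNReal.tsum_le_tsum fun S => ?_
    rw [ciSup_pos (hf1 S)]
    obtain ⟨h1, h2⟩ := key _ (hf1 S)
    simp [extend, gaugeM, h1, h2]
    rw [hf2 S]

theorem step_lemma {X : Type*} [MetricSpace X] [MeasurableSpace X] [BorelSpace X]
    (ζ : Set X → ℝ≥0∞) (γ lam : ℝ≥0∞) (hlam : 0 < lam)
    (hζdbl : ∀ (x : X) (R : ℝ), 0 < R → ENNReal.ofReal R < γ →
      ζ (closedBall x (5 * R)) ≤ lam * ζ (closedBall x R))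
    (ν : Measure X) (t : ℝ≥0∞) (R : ℝ) (hR : ENNReal.ofReal R < γ) (E Ω : Set X)
    (hE : ∀ x ∈ E, closedBall x R ⊆ Ω ∧
      ∃ ρ, 0 < ρ ∧ ρ < R ∧ t < ν (closedBall x ρ) / ζ (closedBall x ρ)) :
    ∃ M, MeasurableSet M ∧ E ⊆ M ∧
      t * OuterMeasure.mkMetric'.pre (gaugeM ζ) (ENNReal.ofReal (10 * R)) M ≤ lam * ν Ω := by
  by_cases hν : ν Ω = ⊤
  · refine ⟨univ, MeasurableSet.univ, subset_univ _, ?_⟩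
    rw [hν, ENNReal.mul_top hlam.ne']
    exact le_top
  choose! ρ hρ using fun x hx => (hE x hx).2
  obtain ⟨u, huE, hdisj, hcov⟩ := Vitali.exists_disjoint_subfamily_covering_enlargement_closedBall
    E id ρ R (fun a ha => (hρ a ha).2.1.le) 5 (by norm_num)
  simp only [id] at hdisj hcov
  have hsub : (⋃ i : u, closedBall i.1 (ρ i)) ⊆ Ω := by
    refine iUnion_subset fun i => ?_
    exact (closedBall_subset_closedBall (hρ i (huE i.2)).2.1.le).trans (hE i (huE i.2)).1
  have hdisj' : Pairwise (Function.onFun Disjoint fun i : u => closedBall i.1 (ρ i)) := by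
    intro i j hij
    exact hdisj i.2 j.2 (fun h => hij (Subtype.ext h))
  have hmeas : ∀ i : u, MeasurableSet (closedBall i.1 (ρ i)) :=
    fun i => isClosed_closedBall.measurableSet
  have hcount := Measure.countable_meas_pos_of_disjoint_of_meas_iUnion_ne_top ν hmeas hdisj'
    (ne_top_of_le_ne_top hν (measure_mono hsub))
  have huniv : {i : u | 0 < ν (closedBall i.1 (ρ i))} = univ := by
    refine eq_univ_of_forall fun i => ?_
    show 0 < ν (closedBall i.1 (ρ i))
    rw [pos_iff_ne_zero]
    intro h0
    have := (hρ i (huE i.2)).2.2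
    rw [h0, ENNReal.zero_div] at this
    exact absurd this (by simp)
  rw [huniv] at hcount
  have : Countable u := Set.countable_univ_iff.1 hcount
  refine ⟨⋃ i : u, closedBall i.1 (5 * ρ i),
    MeasurableSet.iUnion fun i => isClosed_closedBall.measurableSet, ?_, ?_⟩
  · intro x hx
    obtain ⟨b, hb, hxb⟩ := hcov x hx
    exact mem_iUnion.2 ⟨⟨b, hb⟩, hxb (mem_closedBall_self (hρ x hx).1.le)⟩
  calc t * OuterMeasure.mkMetric'.pre (gaugeM ζ) (ENNReal.ofReal (10 * R))
        (⋃ i : u, closedBall i.1 (5 * ρ i))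
      ≤ t * ∑' i : u, lam * ζ (closedBall i.1 (ρ i)) := by
        gcongr
        refine (measure_iUnion_le _).trans (ENNReal.tsum_le_tsum fun i => ?_)
        obtain ⟨h0, h1, h2⟩ := hρ i (huE i.2)
        refine (OuterMeasure.mkMetric'.pre_le ?_).trans ?_
        · rw [← Metric.closedEBall_ofReal (by positivity)]
          refine ediam_closedEBall_le.trans ?_
          rw [show (2 : ℝ≥0∞) = ENNReal.ofReal 2 by simp, ← ENNReal.ofReal_mul (by norm_num)]
          apply ENNReal.ofReal_le_ofReal
          linarith
        · refine (iInf_le _ isClosed_closedBall.measurableSet).trans ?_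
          exact hζdbl _ _ h0 ((ENNReal.ofReal_le_ofReal h1.le).trans_lt hR)
    _ = lam * ∑' i : u, t * ζ (closedBall i.1 (ρ i)) := by
        rw [ENNReal.tsum_mul_left, ENNReal.tsum_mul_left]; ring
    _ ≤ lam * ∑' i : u, ν (closedBall i.1 (ρ i)) := by
        gcongr with i
        exact ENNReal.mul_le_of_le_div (hρ i (huE i.2)).2.2.le
    _ ≤ lam * ν Ω := by
        gcongr
        exact (tsum_meas_le_meas_iUnion_of_disjoint ν hmeas hdisj').trans (measure_mono hsub)

/-- Density-type lemma for a sequence of Borel measures: if the generalized upper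
densities at scale `r_n` are eventually at least `t` on `A`, then for every open
`Ω ⊇ A` one has `λ liminf μ_n(Ω) ≥ t ψ(A)`. -/
theorem statement4 {X : Type*} [MetricSpace X] [MeasurableSpace X] [BorelSpace X]
    (ζ : Set X → ℝ≥0∞) (I γ lam : ℝ≥0∞) (hI : 0 < I) (hγ : 0 < γ)
    (hlam : 0 < lam) (hlamtop : lam ≠ ⊤)
    (hζfin : ∀ (x : X) (R : ℝ), 0 < R → ENNReal.ofReal R < I →
      0 < ζ (closedBall x R) ∧ ζ (closedBall x R) < ⊤)
    (hζdbl : ∀ (x : X) (R : ℝ), 0 < R → ENNReal.ofReal R < γ →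
      ζ (closedBall x (5 * R)) ≤ lam * ζ (closedBall x R))
    (μ : ℕ → Measure X) (t : ℝ≥0∞) (httop : t ≠ ⊤)
    (r : ℕ → ℝ) (hr : ∀ n, 0 < r n) (hrmono : Antitone r)
    (hrlim : Tendsto r atTop (𝓝 0))
    (A : Set X)
    (hA : A ⊆ {x : X | t ≤ liminf (fun n =>
        ⨆ (ρ : ℝ) (_ : 0 < ρ) (_ : ρ < r n),
          μ n (closedBall x ρ) / ζ (closedBall x ρ)) atTop})
    (Ω : Set X) (hΩ : IsOpen Ω) (hAΩ : A ⊆ Ω) :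
    t * caraMeas ζ A ≤ lam * liminf (fun n => μ n Ω) atTop := by
  have hψ : caraMeas ζ A ≤ Measure.mkMetric' (gaugeM ζ) A := by
    refine le_trans ?_ (le_toMeasure_apply _ _ _)
    refine iSup₂_le fun δ hδ => (caraPre_le_pre ζ δ A).trans ?_
    have : OuterMeasure.mkMetric'.pre (gaugeM ζ) (ENNReal.ofReal δ) ≤
        OuterMeasure.mkMetric' (gaugeM ζ) :=
      le_iSup₂_of_le (f := fun (r : ℝ≥0∞) (_ : r > 0) => OuterMeasure.mkMetric'.pre (gaugeM ζ) r)
        (ENNReal.ofReal δ) (ENNReal.ofReal_pos.2 hδ) le_rfl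
    exact this A
  refine (mul_le_mul_right hψ t).trans ?_
  refine ENNReal.mul_le_of_forall_lt fun t' ht' b hb => ?_
  refine (mul_le_mul_right hb.le t').trans ?_
  clear hb b
  -- the increasing pieces
  let P : ℕ → X → Prop := fun n x => ENNReal.ofReal (r n) < γ ∧ closedBall x (r n) ⊆ Ω ∧
    ∃ ρ, 0 < ρ ∧ ρ < r n ∧ t' < μ n (closedBall x ρ) / ζ (closedBall x ρ)
  have hP : ∀ x ∈ A, ∀ᶠ n in atTop, P n x := by
    intro x hx
    have h1 : ∀ᶠ n in atTop, ENNReal.ofReal (r n) < γ := by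
      have := ENNReal.tendsto_ofReal hrlim
      rw [ENNReal.ofReal_zero] at this
      exact this.eventually_lt_const hγ
    have h2 : ∀ᶠ n in atTop, closedBall x (r n) ⊆ Ω := by
      obtain ⟨ε, hε, hεΩ⟩ := Metric.isOpen_iff.1 hΩ x (hAΩ hx)
      filter_upwards [hrlim.eventually_lt_const hε] with n hn
      exact (closedBall_subset_ball hn).trans hεΩ
    have h3 := eventually_lt_of_lt_liminf (ht'.trans_le (hA hx))
    filter_upwards [h1, h2, h3] with n h1 h2 h3
    refine ⟨h1, h2, ?_⟩
    simp only [lt_iSup_iff] at h3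
    obtain ⟨ρ, h0, h4, h5⟩ := h3
    exact ⟨ρ, h0, h4, h5⟩
  let E : ℕ → Set X := fun k => {x ∈ A | ∀ n ≥ k, P n x}
  have hEmono : Monotone E := fun k l hkl x hx => ⟨hx.1, fun n hn => hx.2 n (hkl.trans hn)⟩
  have hEA : A ⊆ ⋃ k, E k := by
    intro x hx
    obtain ⟨k, hk⟩ := eventually_atTop.1 (hP x hx)
    exact mem_iUnion.2 ⟨k, hx, hk⟩
  refine (mul_le_mul_right (measure_mono hEA) t').trans ?_
  rw [hEmono.measure_iUnion, ENNReal.mul_iSup]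
  refine iSup_le fun k => ?_
  by_cases hne : (E k).Nonempty
  swap
  · rw [not_nonempty_iff_eq_empty.1 hne]; simp
  obtain ⟨x₀, hx₀⟩ := hne
  have hM : ∀ n, ∃ M, MeasurableSet M ∧ E k ⊆ M ∧ (k ≤ n →
      t' * OuterMeasure.mkMetric'.pre (gaugeM ζ) (ENNReal.ofReal (10 * r n)) M ≤
        lam * μ n Ω) := by
    intro n
    by_cases hn : k ≤ n
    · obtain ⟨M, h1, h2, h3⟩ := step_lemma ζ γ lam hlam hζdbl (μ n) t' (r n) (hx₀.2 n hn).1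
        (E k) Ω (fun x hx => (hx.2 n hn).2)
      exact ⟨M, h1, h2, fun _ => h3⟩
    · exact ⟨univ, MeasurableSet.univ, subset_univ _, fun h => absurd h hn⟩
  choose M hM1 hM2 hM3 using hM
  have hmi : MeasurableSet (⋂ n, M n) := MeasurableSet.iInter hM1
  refine (mul_le_mul_right (measure_mono (subset_iInter hM2)) t').trans ?_
  rw [Measure.mkMetric', toMeasure_apply _ _ hmi, OuterMeasure.mkMetric']
  simp only [OuterMeasure.iSup_apply, ENNReal.mul_iSup]
  refine iSup₂_le fun δ hδ => ?_
  rw [mul_comm lam, ← ENNReal.div_le_iff hlam.ne' hlamtop]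
  refine le_liminf_of_le (by isBoundedDefault) ?_
  have h10 : Tendsto (fun n => ENNReal.ofReal (10 * r n)) atTop (𝓝 0) := by
    have := ENNReal.tendsto_ofReal (hrlim.const_mul 10)
    simpa using this
  filter_upwards [h10.eventually_lt_const hδ, eventually_ge_atTop k] with n hn hkn
  rw [ENNReal.div_le_iff hlam.ne' hlamtop, mul_comm _ lam]
  refine le_trans ?_ (hM3 n hkn)
  refine mul_le_mul_right ?_ t'
  exact (OuterMeasure.mkMetric'.mono_pre _ hn.le _).trans (measure_mono (iInter_subset _ n))
end

section
/- Let X be a metric space equipped with Carathéodory's construction from an admissible gauge ζ on the Borel sets, producing the measure ψ, and let λ be the doubling constant of ζ. For each n ∈ ℕ let μ_n be a Borel measure on X, and let r_n be positive numbers with r_n → 0. Assume there exist an open set Ω ⊂ X, a set Θ ⊂ X with ψ(Θ) = 0, and a ψ-measurable function g : Ω → [0,∞] such that Ω \ Θ ⊂ { x ∈ X : liminf_{n→∞} ( sup_{0<ρ<r_n} μ_n(B_ρ(x))/ζ(B_ρ(x)) ) ≥ g(x) }. Then λ · liminf_{n→∞} μ_n(Ω) ≥ ∫_Ω g dψ.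 -/
open MeasureTheory Metric Filter Set
open scoped ENNReal Topology

theorem aux_step {X : Type*} [MetricSpace X] [MeasurableSpace X] [BorelSpace X]
    (ζ : Set X → ℝ≥0∞) (γ lam : ℝ≥0∞) (hlam : 0 < lam)
    (hζdbl : ∀ (x : X) (R : ℝ), 0 < R → ENNReal.ofReal R < γ →
      ζ (closedBall x (5 * R)) ≤ lam * ζ (closedBall x R))
    (μ : Measure X) (r δ : ℝ) (hrγ : ENNReal.ofReal r < γ) (hrδ : 10 * r ≤ δ)
    (U : Set X) (t : ℝ≥0∞) (A : Set X)
    (hA : ∀ x ∈ A, closedBall x r ⊆ U ∧ ∃ ρ, 0 < ρ ∧ ρ < r ∧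
      t < μ (closedBall x ρ) / ζ (closedBall x ρ)) :
    t * caraPre ζ δ A ≤ lam * μ U := by
  by_cases hU : μ U = ⊤
  · rw [hU, ENNReal.mul_top hlam.ne']; exact le_top
  have h' : ∀ x, ∃ ρ, x ∈ A → 0 < ρ ∧ ρ < r ∧
      t < μ (closedBall x ρ) / ζ (closedBall x ρ) := by
    intro x
    by_cases hx : x ∈ A
    · obtain ⟨ρ, h⟩ := (hA x hx).2
      exact ⟨ρ, fun _ => h⟩
    · exact ⟨0, fun h => absurd h hx⟩
  choose ρ hρ using h'
  obtain ⟨u, huA, hdisj, hcov⟩ :=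
    Vitali.exists_disjoint_subfamily_covering_enlargement_closedBall A (fun x => x) ρ r
      (fun a ha => (hρ a ha).2.1.le) 5 (by norm_num)
  have hdisj' : Pairwise (Function.onFun Disjoint
      (fun x : u => closedBall (x : X) (ρ x))) := by
    intro x y hxy
    exact hdisj x.2 y.2 (fun h => hxy (Subtype.ext h))
  have hmeas : ∀ x : u, MeasurableSet (closedBall (x : X) (ρ x)) :=
    fun x => isClosed_closedBall.measurableSet
  have hUn : (⋃ x : u, closedBall (x : X) (ρ x)) ⊆ U := by
    refine iUnion_subset fun x => ?_
    exact (closedBall_subset_closedBall (hρ x (huA x.2)).2.1.le).trans (hA x (huA x.2)).1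
  have hcount : u.Countable := by
    have := Measure.countable_meas_pos_of_disjoint_of_meas_iUnion_ne_top μ hmeas hdisj'
      (ne_top_of_le_ne_top hU (measure_mono hUn))
    have h2 : {i : u | 0 < μ (closedBall (i : X) (ρ i))} = univ := by
      refine eq_univ_of_forall fun x => ?_
      have h3 := (hρ x (huA x.2)).2.2
      rw [mem_setOf_eq, pos_iff_ne_zero]
      intro h0
      rw [h0, ENNReal.zero_div] at h3
      exact not_lt_zero h3
    rw [h2, countable_univ_iff] at this
    exact this
  set f : X → Set X := fun x => closedBall x (5 * ρ x) with hf
  have h1 : caraPre ζ δ A ≤ ∑' S : (f '' u), ζ S.1 := by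
    unfold caraPre
    refine iInf_le_of_le (f '' u) <| iInf_le_of_le (hcount.image f) <| iInf_le_of_le ?_ <|
      iInf_le_of_le ?_ <| iInf_le_of_le ?_ le_rfl
    · rintro _ ⟨x, hx, rfl⟩
      exact isClosed_closedBall.measurableSet
    · rintro _ ⟨x, hx, rfl⟩
      have hx' := hρ x (huA hx)
      refine (Metric.ediam_le_of_forall_dist_le fun a ha b hb => ?_)
      have e1 := mem_closedBall.1 ha
      have e2 := mem_closedBall'.1 hb
      linarith [dist_triangle a x b]
    · intro x hx
      obtain ⟨b, hb, hsub⟩ := hcov x hx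
      exact ⟨f b, ⟨b, hb, rfl⟩, hsub (mem_closedBall_self (hρ x hx).1.le)⟩
  have h2 : ∑' S : (f '' u), ζ S.1 ≤ ∑' x : u, ζ (f x) :=
    ENNReal.tsum_le_tsum_comp_of_surjective (f := imageFactorization f u)
      imageFactorization_surjective (fun S : (f '' u) => ζ S.1)
  calc t * caraPre ζ δ A ≤ t * ∑' x : u, ζ (f x) := by gcongr; exact h1.trans h2
    _ = ∑' x : u, t * ζ (f x) := ENNReal.tsum_mul_left.symm
    _ ≤ ∑' x : u, lam * μ (closedBall (x : X) (ρ x)) := by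
        refine ENNReal.tsum_le_tsum fun x => ?_
        have hx' := hρ x (huA x.2)
        calc t * ζ (f x) ≤ t * (lam * ζ (closedBall x (ρ x))) := by
              gcongr
              exact hζdbl x (ρ x) hx'.1
                ((ENNReal.ofReal_le_ofReal hx'.2.1.le).trans_lt hrγ)
          _ = lam * (t * ζ (closedBall x (ρ x))) := by ring
          _ ≤ _ := by
              gcongr
              exact ENNReal.mul_le_of_le_div hx'.2.2.le
    _ = lam * ∑' x : u, μ (closedBall (x : X) (ρ x)) := ENNReal.tsum_mul_left
    _ ≤ lam * μ U := by
        gcongr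
        exact (tsum_meas_le_meas_iUnion_of_disjoint μ hmeas hdisj').trans (measure_mono hUn)

theorem aux_basic {X : Type*} [MetricSpace X] [MeasurableSpace X] [BorelSpace X]
    (ζ : Set X → ℝ≥0∞) (γ lam : ℝ≥0∞) (hγ : 0 < γ)
    (hlam : 0 < lam) (hlamtop : lam ≠ ⊤)
    (hζdbl : ∀ (x : X) (R : ℝ), 0 < R → ENNReal.ofReal R < γ →
      ζ (closedBall x (5 * R)) ≤ lam * ζ (closedBall x R))
    (ψ : Measure X) (hψ : ∀ A : Set X, ψ A = caraMeas ζ A)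
    (μ : ℕ → Measure X)
    (r : ℕ → ℝ) (hrlim : Tendsto r atTop (𝓝 0))
    (U : Set X) (hU : IsOpen U) (A : Set X) (hAU : A ⊆ U) (c : ℝ≥0∞)
    (hA : ∀ x ∈ A, c ≤ liminf (fun n =>
        ⨆ (ρ : ℝ) (_ : 0 < ρ) (_ : ρ < r n),
          μ n (closedBall x ρ) / ζ (closedBall x ρ)) atTop) :
    c * ψ A ≤ lam * liminf (fun n => μ n U) atTop := by
  refine ENNReal.mul_le_of_forall_lt fun t ht b hb => ?_
  refine (mul_le_mul_right hb.le t).trans ?_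
  set AN : ℕ → Set X := fun N => {x ∈ A | ∀ n, N ≤ n → closedBall x (r n) ⊆ U ∧
    t < ⨆ (ρ : ℝ) (_ : 0 < ρ) (_ : ρ < r n),
          μ n (closedBall x ρ) / ζ (closedBall x ρ)} with hAN
  have hmono : Monotone AN := by
    intro N M hNM x hx
    exact ⟨hx.1, fun n hn => hx.2 n (hNM.trans hn)⟩
  have hUnion : A ⊆ ⋃ N, AN N := by
    intro x hx
    have e1 : ∀ᶠ n in atTop, t < ⨆ (ρ : ℝ) (_ : 0 < ρ) (_ : ρ < r n),
          μ n (closedBall x ρ) / ζ (closedBall x ρ) :=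
      eventually_lt_of_lt_liminf (ht.trans_le (hA x hx))
    have e2 : ∀ᶠ n in atTop, closedBall x (r n) ⊆ U := by
      obtain ⟨ε, hε, hb⟩ := Metric.isOpen_iff.1 hU x (hAU hx)
      filter_upwards [hrlim.eventually (gt_mem_nhds hε)] with n hn
      exact (closedBall_subset_ball hn).trans hb
    obtain ⟨N, hN⟩ := eventually_atTop.1 (e2.and e1)
    exact mem_iUnion.2 ⟨N, hx, hN⟩
  refine (mul_le_mul_right (measure_mono hUnion) t).trans ?_
  rw [hmono.measure_iUnion, ENNReal.mul_iSup]
  refine iSup_le fun N => ?_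
  rw [hψ, caraMeas]
  simp only [ENNReal.mul_iSup]
  refine iSup₂_le fun δ hδ => ?_
  rw [← ENNReal.liminf_const_mul_of_ne_top hlamtop]
  refine le_liminf_of_le (by isBoundedDefault) ?_
  have e3 : ∀ᶠ n in atTop, r n < δ / 10 := hrlim.eventually (gt_mem_nhds (by positivity))
  have e4 : ∀ᶠ n in atTop, ENNReal.ofReal (r n) < γ := by
    have := ENNReal.tendsto_ofReal hrlim
    rw [ENNReal.ofReal_zero] at this
    exact this.eventually (gt_mem_nhds hγ)
  filter_upwards [e3, e4, eventually_ge_atTop N] with n h3 h4 h5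
  refine aux_step ζ γ lam hlam hζdbl (μ n) (r n) δ h4 (by linarith) U t (AN N) ?_
  intro x hx
  refine ⟨(hx.2 n h5).1, ?_⟩
  have := (hx.2 n h5).2
  simp only [lt_iSup_iff] at this
  obtain ⟨ρ, h1, h2, h3⟩ := this
  exact ⟨ρ, h1, h2, h3⟩

theorem aux_sum_liminf {ι : Type*} (s : Finset ι) (u : ι → ℕ → ℝ≥0∞) :
    ∑ i ∈ s, liminf (u i) atTop ≤ liminf (fun n => ∑ i ∈ s, u i n) atTop := by
  classical
  induction s using Finset.induction_on with
  | empty => simp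
  | insert a s ha ih =>
    simp only [Finset.sum_insert ha]
    refine (add_le_add le_rfl ih).trans ?_
    rw [Filter.liminf_eq_iSup_iInf_of_nat, Filter.liminf_eq_iSup_iInf_of_nat,
      Filter.liminf_eq_iSup_iInf_of_nat]
    rw [ENNReal.iSup_add_iSup_of_monotone]
    · refine iSup_mono fun n => le_iInf₂ fun i hi => ?_
      exact add_le_add (iInf₂_le i hi) (iInf₂_le i hi)
    · intro m n hmn
      exact le_iInf₂ fun i hi => iInf₂_le i (hmn.trans hi)
    · intro m n hmn
      exact le_iInf₂ fun i hi => iInf₂_le i (hmn.trans hi)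

/-- Density-type lemma with a measurable lower-bound function `g`:
`λ liminf μ_n(Ω) ≥ ∫_Ω g dψ`. Here `ψ` is a measure agreeing with Carathéodory's
construction from `ζ` on all sets. -/
theorem statement5 {X : Type*} [MetricSpace X] [MeasurableSpace X] [BorelSpace X]
    (ζ : Set X → ℝ≥0∞) (I γ lam : ℝ≥0∞) (hI : 0 < I) (hγ : 0 < γ)
    (hlam : 0 < lam) (hlamtop : lam ≠ ⊤)
    (hζfin : ∀ (x : X) (R : ℝ), 0 < R → ENNReal.ofReal R < I →
      0 < ζ (closedBall x R) ∧ ζ (closedBall x R) < ⊤)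
    (hζdbl : ∀ (x : X) (R : ℝ), 0 < R → ENNReal.ofReal R < γ →
      ζ (closedBall x (5 * R)) ≤ lam * ζ (closedBall x R))
    (ψ : Measure X) (hψ : ∀ A : Set X, ψ A = caraMeas ζ A)
    (μ : ℕ → Measure X)
    (r : ℕ → ℝ) (hr : ∀ n, 0 < r n) (hrlim : Tendsto r atTop (𝓝 0))
    (Ω : Set X) (hΩ : IsOpen Ω)
    (Θ : Set X) (hΘ : caraMeas ζ Θ = 0)
    (g : X → ℝ≥0∞) (hg : AEMeasurable g ψ)
    (hsub : Ω \ Θ ⊆ {x : X | g x ≤ liminf (fun n =>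
        ⨆ (ρ : ℝ) (_ : 0 < ρ) (_ : ρ < r n),
          μ n (closedBall x ρ) / ζ (closedBall x ρ)) atTop}) :
    ∫⁻ x in Ω, g x ∂ψ ≤ lam * liminf (fun n => μ n Ω) atTop := by
  by_cases hL : liminf (fun n => μ n Ω) atTop = ⊤
  · rw [hL, ENNReal.mul_top hlam.ne']; exact le_top
  have hLt : lam * liminf (fun n => μ n Ω) atTop ≠ ⊤ := ENNReal.mul_ne_top hlamtop hL
  have key : ∀ (U : Set X), IsOpen U → U ⊆ Ω → ∀ A ⊆ U, ∀ c : ℝ≥0∞, (∀ x ∈ A, c ≤ g x) →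
      c * ψ A ≤ lam * liminf (fun n => μ n U) atTop := by
    intro U hU hUΩ A hAU c hc
    have hΘ' : ψ Θ = 0 := by rw [hψ, hΘ]
    rw [← measure_diff_null hΘ']
    refine aux_basic ζ γ lam hγ hlam hlamtop hζdbl ψ hψ μ r hrlim U hU (A \ Θ)
      (diff_subset.trans hAU) c fun x hx => ?_
    exact (hc x hx.1).trans (hsub ⟨hUΩ (hAU hx.1), hx.2⟩)
  rw [lintegral]
  refine iSup₂_le fun s hs => ?_
  rw [SimpleFunc.lintegral]
  refine ENNReal.le_of_forall_lt_one_mul_le fun θ hθ => ?_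
  have hK : ∀ c : ℝ≥0∞, ∃ K : Set X, IsClosed K ∧ K ⊆ s ⁻¹' {c} ∩ Ω ∧
      θ * (c * ψ.restrict Ω (s ⁻¹' {c})) ≤ c * ψ K := by
    intro c
    have hm : MeasurableSet (s ⁻¹' {c} ∩ Ω) :=
      (s.measurableSet_preimage _).inter hΩ.measurableSet
    rw [Measure.restrict_apply (s.measurableSet_preimage _)]
    by_cases hc0 : c = 0
    · exact ⟨∅, isClosed_empty, empty_subset _, by simp [hc0]⟩
    by_cases h0 : ψ (s ⁻¹' {c} ∩ Ω) = 0
    · exact ⟨∅, isClosed_empty, empty_subset _, by simp [h0]⟩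
    have hfin : ψ (s ⁻¹' {c} ∩ Ω) ≠ ⊤ := by
      intro htop
      have := key Ω hΩ subset_rfl (s ⁻¹' {c} ∩ Ω) inter_subset_right c (fun x hx => by
        have h1 : s x = c := hx.1
        exact h1 ▸ hs x)
      rw [htop, ENNReal.mul_top hc0] at this
      exact hLt (top_le_iff.1 this)
    have : IsFiniteMeasure (ψ.restrict (s ⁻¹' {c} ∩ Ω)) :=
      ⟨by rw [Measure.restrict_apply_univ]; exact hfin.lt_top⟩
    have hlt : θ * ψ (s ⁻¹' {c} ∩ Ω) < ψ.restrict (s ⁻¹' {c} ∩ Ω) (s ⁻¹' {c} ∩ Ω) := by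
      rw [Measure.restrict_apply_self]
      calc θ * ψ (s ⁻¹' {c} ∩ Ω) < 1 * ψ (s ⁻¹' {c} ∩ Ω) :=
            ENNReal.mul_lt_mul_left h0 hfin hθ
        _ = _ := one_mul _
    obtain ⟨K, hKs, hKc, hKl⟩ := hm.exists_lt_isClosed_of_ne_top (measure_ne_top _ _) hlt
    refine ⟨K, hKc, hKs, ?_⟩
    rw [Measure.restrict_eq_self _ hKs] at hKl
    calc θ * (c * ψ (s ⁻¹' {c} ∩ Ω)) = c * (θ * ψ (s ⁻¹' {c} ∩ Ω)) := by ring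
      _ ≤ _ := by gcongr
  choose K hKc hKs hKl using hK
  set W : ℝ≥0∞ → Set X := fun c => ⋃ d ∈ s.range.filter (fun d => d ≠ c), K d with hW
  have hWc : ∀ c, IsClosed (W c) := fun c =>
    Set.Finite.isClosed_biUnion (Finset.finite_toSet _) (fun d _ => hKc d)
  set V : ℝ≥0∞ → Set X := fun c => {x | infEDist x (K c) < infEDist x (W c)} ∩ Ω with hV
  have hVo : ∀ c, IsOpen (V c) := fun c =>
    (isOpen_lt continuous_infEDist continuous_infEDist).inter hΩ
  have hKV : ∀ c, K c ⊆ V c := by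
    intro c x hx
    refine ⟨?_, (hKs c hx).2⟩
    rw [mem_setOf_eq, infEDist_zero_of_mem hx, pos_iff_ne_zero]
    intro h0
    have hxW : x ∈ W c := by
      rw [← (hWc c).closure_eq]
      exact mem_closure_iff_infEDist_zero.2 h0
    simp only [hW, mem_iUnion, Finset.mem_filter] at hxW
    obtain ⟨d, ⟨_, hd⟩, hxd⟩ := hxW
    have h1 : s x = d := (hKs d hxd).1
    have h2 : s x = c := (hKs c hx).1
    exact hd (h1.symm.trans h2)
  have hVd : (s.range : Set ℝ≥0∞).PairwiseDisjoint V := by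
    intro c hc d hd hcd
    refine Set.disjoint_left.2 fun x hxc hxd => ?_
    have h1 : infEDist x (W c) ≤ infEDist x (K d) := by
      refine infEDist_anti ?_
      exact subset_biUnion_of_mem (u := K) (Finset.mem_filter.2 ⟨hd, hcd.symm⟩)
    have h2 : infEDist x (W d) ≤ infEDist x (K c) := by
      refine infEDist_anti ?_
      exact subset_biUnion_of_mem (u := K) (Finset.mem_filter.2 ⟨hc, hcd⟩)
    have h3 : infEDist x (K c) < infEDist x (W c) := hxc.1
    have h4 : infEDist x (K d) < infEDist x (W d) := hxd.1
    exact lt_irrefl _ (h3.trans_le (h1.trans (h4.le.trans h2)))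
  rw [Finset.mul_sum]
  calc ∑ c ∈ s.range, θ * (c * ψ.restrict Ω (s ⁻¹' {c}))
      ≤ ∑ c ∈ s.range, lam * liminf (fun n => μ n (V c)) atTop := by
        refine Finset.sum_le_sum fun c _ => (hKl c).trans ?_
        refine key (V c) (hVo c) inter_subset_right (K c) (hKV c) c fun x hx => ?_
        have h1 : s x = c := (hKs c hx).1
        exact h1 ▸ hs x
    _ = lam * ∑ c ∈ s.range, liminf (fun n => μ n (V c)) atTop := (Finset.mul_sum _ _ _).symm
    _ ≤ lam * liminf (fun n => μ n Ω) atTop := by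
        gcongr
        refine (aux_sum_liminf s.range fun c n => μ n (V c)).trans ?_
        refine liminf_le_liminf (Eventually.of_forall fun n => ?_)
        rw [← measure_biUnion_finset hVd (fun c _ => (hVo c).measurableSet)]
        exact measure_mono (iUnion₂_subset fun c _ => inter_subset_right)
end

section
/- Let X be a metric space equipped with Carathéodory's construction from an admissible gauge ζ on the Borel sets, producing the measure ψ. For each n ∈ ℕ let μ_n be a Borel measure on X. Suppose A ⊂ { x ∈ X : lim_{δ→0⁺} limsup_{n→∞} ( sup_{0<ρ<δ} μ_n(B_ρ(x))/ζ(B_ρ(x)) ) > 0 }, and assume there exists an open set Ω containing A such that Σ_{n=1}^∞ μ_n(Ω) < ∞. Then ψ(A) = 0. -/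
open MeasureTheory Metric Filter Set
open scoped ENNReal Topology

theorem caraPre_le_of_cover {X : Type*} [MetricSpace X] [MeasurableSpace X]
    (ζ : Set X → ℝ≥0∞) (δ : ℝ) (A : Set X) (G : Set (Set X)) (h1 : G.Countable)
    (h2 : ∀ S ∈ G, MeasurableSet S)
    (h3 : ∀ S ∈ G, EMetric.diam S ≤ ENNReal.ofReal δ) (h4 : A ⊆ ⋃₀ G) :
    caraPre ζ δ A ≤ ∑' S : G, ζ S.1 := by
  unfold caraPre
  exact iInf_le_of_le G (iInf_le_of_le h1 (iInf_le_of_le h2 (iInf_le_of_le h3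
    (iInf_le_of_le h4 le_rfl))))

theorem exists_cover_of_caraPre_lt {X : Type*} [MetricSpace X] [MeasurableSpace X]
    (ζ : Set X → ℝ≥0∞) (δ : ℝ) (A : Set X) (ε : ℝ≥0∞) (h : caraPre ζ δ A < ε) :
    ∃ G : Set (Set X), G.Countable ∧ (∀ S ∈ G, MeasurableSet S) ∧
      (∀ S ∈ G, EMetric.diam S ≤ ENNReal.ofReal δ) ∧ A ⊆ ⋃₀ G ∧
      ∑' S : G, ζ S.1 < ε := by
  unfold caraPre at h
  simp only [iInf_lt_iff] at h
  obtain ⟨G, h1, h2, h3, h4, h5⟩ := h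
  exact ⟨G, h1, h2, h3, h4, h5⟩

theorem caraPre_iUnion_zero {X : Type*} [MetricSpace X] [MeasurableSpace X]
    (ζ : Set X → ℝ≥0∞) (δ : ℝ) (A : ℕ → Set X) (h : ∀ n, caraPre ζ δ (A n) = 0)
    (B : Set X) (hB : B ⊆ ⋃ n, A n) :
    caraPre ζ δ B = 0 := by
  refine le_antisymm (le_of_forall_pos_le_add fun ε hε => ?_) bot_le
  rw [zero_add]
  obtain ⟨e, he, hes⟩ := ENNReal.exists_pos_sum_of_countable' hε.ne' ℕ
  choose G h1 h2 h3 h4 h5 using fun n =>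
    exists_cover_of_caraPre_lt ζ δ (A n) (e n) (by rw [h n]; exact he n)
  refine (caraPre_le_of_cover ζ δ B (⋃ n, G n) (countable_iUnion h1) ?_ ?_ ?_).trans ?_
  · intro S hS
    obtain ⟨n, hn⟩ := mem_iUnion.1 hS
    exact h2 n S hn
  · intro S hS
    obtain ⟨n, hn⟩ := mem_iUnion.1 hS
    exact h3 n S hn
  · intro x hx
    obtain ⟨n, hn⟩ := mem_iUnion.1 (hB hx)
    obtain ⟨S, hS, hxS⟩ := h4 n hn
    exact ⟨S, mem_iUnion.2 ⟨n, hS⟩, hxS⟩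
  · refine (ENNReal.tsum_iUnion_le_tsum (fun S => ζ S) G).trans ?_
    exact (ENNReal.tsum_le_tsum fun n => (h5 n).le).trans hes.le

/-- A limsup-version density lemma: if `Σ_n μ_n(Ω) < ∞` for some open `Ω ⊇ A`, and at
every point of `A` the quantity `lim_{δ→0⁺} limsup_n sup_{0<ρ<δ} μ_n(B_ρ(x))/ζ(B_ρ(x))`
is positive, then `ψ(A) = 0`. (The limit as `δ → 0⁺` is the infimum over `δ > 0`, by
monotonicity in `δ`.) -/
theorem statement6 {X : Type*} [MetricSpace X] [MeasurableSpace X] [BorelSpace X]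
    (ζ : Set X → ℝ≥0∞) (I γ lam : ℝ≥0∞) (hI : 0 < I) (hγ : 0 < γ)
    (hlam : 0 < lam) (hlamtop : lam ≠ ⊤)
    (hζfin : ∀ (x : X) (R : ℝ), 0 < R → ENNReal.ofReal R < I →
      0 < ζ (closedBall x R) ∧ ζ (closedBall x R) < ⊤)
    (hζdbl : ∀ (x : X) (R : ℝ), 0 < R → ENNReal.ofReal R < γ →
      ζ (closedBall x (5 * R)) ≤ lam * ζ (closedBall x R))
    (μ : ℕ → Measure X) (A : Set X)
    (hA : A ⊆ {x : X | 0 < ⨅ (δ : ℝ) (_ : 0 < δ), limsup (fun n =>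
        ⨆ (ρ : ℝ) (_ : 0 < ρ) (_ : ρ < δ),
          μ n (closedBall x ρ) / ζ (closedBall x ρ)) atTop})
    (Ω : Set X) (hΩ : IsOpen Ω) (hAΩ : A ⊆ Ω)
    (hsum : ∑' n, μ n Ω < ⊤) :
    caraMeas ζ A = 0 := by
  unfold caraMeas
  refine le_antisymm (iSup₂_le fun δ hδ => le_of_eq ?_) bot_le
  let T : ℕ → Set X := fun k => {x | x ∈ A ∧ closedBall x (1 / ((k : ℝ) + 1)) ⊆ Ω ∧
    ((k : ℝ≥0∞) + 1)⁻¹ < ⨅ (δ : ℝ) (_ : 0 < δ), limsup (fun n =>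
        ⨆ (ρ : ℝ) (_ : 0 < ρ) (_ : ρ < δ),
          μ n (closedBall x ρ) / ζ (closedBall x ρ)) atTop}
  refine caraPre_iUnion_zero ζ δ T ?_ A ?_
  swap
  · intro x hx
    have hpos := hA hx
    rw [mem_setOf_eq] at hpos
    obtain ⟨r, hr, hrΩ⟩ := Metric.nhds_basis_closedBall.mem_iff.1 (hΩ.mem_nhds (hAΩ hx))
    obtain ⟨k1, hk1⟩ := exists_nat_one_div_lt hr
    obtain ⟨k2, hk2⟩ := ENNReal.exists_inv_nat_lt hpos.ne'
    refine mem_iUnion.2 ⟨max k1 k2, hx, ?_, ?_⟩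
    · refine (closedBall_subset_closedBall ?_).trans hrΩ
      refine le_trans ?_ hk1.le
      apply one_div_le_one_div_of_le (by positivity)
      push_cast
      have := le_max_left (k1 : ℝ) k2
      linarith
    · refine lt_of_le_of_lt ?_ hk2
      apply ENNReal.inv_le_inv.2
      have : (k2 : ℝ≥0∞) ≤ ((max k1 k2 : ℕ) : ℝ≥0∞) := by exact_mod_cast le_max_right k1 k2
      exact this.trans le_self_add
  intro k
  have hc0 : ((k : ℝ≥0∞) + 1) ≠ ⊤ := by simp
  obtain ⟨d, hd0, hdI, hdγ, hdδ, hdk⟩ : ∃ d : ℝ, 0 < d ∧ ENNReal.ofReal d < I ∧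
      ENNReal.ofReal d < γ ∧ 10 * d < δ ∧ d < 1 / ((k : ℝ) + 1) := by
    have ht : Tendsto ENNReal.ofReal (𝓝[>] 0) (𝓝 0) := by
      have := (ENNReal.continuous_ofReal.tendsto 0).mono_left (nhdsWithin_le_nhds (s := Ioi 0))
      simpa using this
    have hid : Tendsto (fun d : ℝ => d) (𝓝[>] 0) (𝓝 0) := nhdsWithin_le_nhds
    have e1 := ht.eventually (gt_mem_nhds hI)
    have e2 := ht.eventually (gt_mem_nhds hγ)
    have e3 := hid.eventually (gt_mem_nhds (show (0 : ℝ) < δ / 10 by positivity))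
    have e4 := hid.eventually (gt_mem_nhds (show (0 : ℝ) < 1 / ((k : ℝ) + 1) by positivity))
    obtain ⟨d, a0, a1, a2, a3, a4⟩ :=
      ((eventually_mem_nhdsWithin (a := (0 : ℝ)) (s := Ioi 0)).and
        (e1.and (e2.and (e3.and e4)))).exists
    exact ⟨d, a0, a1, a2, by linarith, a4⟩
  have key : ∀ N : ℕ, caraPre ζ δ (T k) ≤ lam * (k + 1) * ∑' n, μ (n + N) Ω := by
    intro N
    have hex : ∀ x : T k, ∃ n ρ, 0 < ρ ∧ ρ < d ∧
        ζ (closedBall x.1 ρ) ≤ (k + 1) * μ (n + N) (closedBall x.1 ρ) := by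
      rintro ⟨x, hxA, hxΩ, hx⟩
      have h1 := lt_of_lt_of_le hx (iInf₂_le d hd0)
      have h2 := frequently_lt_of_lt_limsup (by isBoundedDefault) h1
      obtain ⟨n, hn, h3⟩ := (frequently_atTop.1 h2) N
      simp only [lt_iSup_iff] at h3
      obtain ⟨ρ, hρ, hρd, h4⟩ := h3
      refine ⟨n - N, ρ, hρ, hρd, ?_⟩
      rw [Nat.sub_add_cancel hn]
      obtain ⟨z0, z1⟩ := hζfin x ρ hρ ((ENNReal.ofReal_le_ofReal hρd.le).trans_lt hdI)
      have h5 := h4.le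
      rw [ENNReal.le_div_iff_mul_le (Or.inl z0.ne') (Or.inl z1.ne)] at h5
      rwa [← ENNReal.div_eq_inv_mul, ENNReal.div_le_iff_le_mul (Or.inl (by simp))
        (Or.inl hc0), mul_comm] at h5
    choose n ρ hρ0 hρd hρ using hex
    obtain ⟨u, -, hdisj, hcov⟩ :=
      Vitali.exists_disjoint_subfamily_covering_enlargement_closedBall (univ : Set (T k))
        (fun x => x.1) ρ d (fun a _ => (hρd a).le) 5 (by norm_num)
    let ν : Measure X := Measure.sum (fun n => μ (n + N))
    have hνΩ : ν Ω = ∑' n, μ (n + N) Ω := Measure.sum_apply _ hΩ.measurableSet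
    have hfin : ∑' n, μ (n + N) Ω ≠ ⊤ := by
      refine ne_top_of_le_ne_top hsum.ne ?_
      exact ENNReal.tsum_comp_le_tsum_of_injective (add_left_injective N) (fun n => μ n Ω)
    have hζν : ∀ x : T k, ζ (closedBall x.1 (ρ x)) ≤ (k + 1) * ν (closedBall x.1 (ρ x)) := by
      intro x
      refine (hρ x).trans ?_
      gcongr
      exact Measure.le_sum (fun n => μ (n + N)) (n x)
    have hsumν : ∑' x : u, ν (closedBall x.1.1 (ρ x.1)) ≤ ν Ω := by
      refine (tsum_meas_le_meas_iUnion_of_disjoint ν (fun x : u => isClosed_closedBall.measurableSet)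
        ?_).trans (measure_mono (iUnion_subset fun x => ?_))
      · intro a b hab
        exact hdisj a.2 b.2 (fun h => hab (Subtype.ext h))
      · exact (closedBall_subset_closedBall ((hρd x.1).le.trans hdk.le)).trans x.1.2.2.1
    have hucount : u.Countable := by
      have hs := Summable.countable_support_ennreal
        (f := fun x : u => ν (closedBall x.1.1 (ρ x.1)))
        (ne_top_of_le_ne_top (hνΩ ▸ hfin) hsumν)
      have : Function.support (fun x : u => ν (closedBall x.1.1 (ρ x.1))) = univ := by
        refine eq_univ_of_forall fun x => ?_
        intro h0
        have := hζν x.1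
        simp only at h0
        rw [h0, mul_zero] at this
        exact absurd this (not_le.2 (hζfin _ _ (hρ0 x.1)
          ((ENNReal.ofReal_le_ofReal (hρd x.1).le).trans_lt hdI)).1)
      rw [this] at hs
      exact countable_coe_iff.1 (countable_univ_iff.1 hs)
    let F : T k → Set X := fun x => closedBall x.1 (5 * ρ x)
    refine (caraPre_le_of_cover ζ δ (T k) (F '' u) (hucount.image F) ?_ ?_ ?_).trans ?_
    · rintro _ ⟨x, -, rfl⟩
      exact isClosed_closedBall.measurableSet
    · rintro _ ⟨x, -, rfl⟩
      refine Metric.ediam_le_of_forall_dist_le fun a ha b hb => ?_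
      have h1 := dist_triangle_right a b x.1
      have h2 : dist a x.1 ≤ 5 * ρ x := ha
      have h3 : dist b x.1 ≤ 5 * ρ x := hb
      have := hρd x
      linarith
    · intro x hx
      obtain ⟨b, hb, hsub⟩ := hcov ⟨x, hx⟩ (mem_univ _)
      exact ⟨F b, mem_image_of_mem F hb, hsub (mem_closedBall_self (hρ0 _).le)⟩
    · calc ∑' S : (F '' u), ζ S.1 ≤ ∑' x : u, ζ (F x.1) :=
            ENNReal.tsum_le_tsum_comp_of_surjective
              (f := fun x : u => (⟨F x.1, mem_image_of_mem F x.2⟩ : (F '' u)))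
              (by rintro ⟨_, x, hx, rfl⟩; exact ⟨⟨x, hx⟩, rfl⟩) (fun S => ζ S.1)
        _ ≤ ∑' x : u, lam * (k + 1) * ν (closedBall x.1.1 (ρ x.1)) := by
            refine ENNReal.tsum_le_tsum fun x => ?_
            refine (hζdbl x.1.1 (ρ x.1) (hρ0 _)
              ((ENNReal.ofReal_le_ofReal (hρd x.1).le).trans_lt hdγ)).trans ?_
            rw [mul_assoc]
            gcongr
            exact hζν x.1
        _ = lam * (k + 1) * ∑' x : u, ν (closedBall x.1.1 (ρ x.1)) := ENNReal.tsum_mul_left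
        _ ≤ lam * (k + 1) * ∑' n, μ (n + N) Ω := by
            rw [← hνΩ]
            gcongr
  have hlim := ENNReal.Tendsto.const_mul (a := lam * ((k : ℝ≥0∞) + 1))
    (ENNReal.tendsto_sum_nat_add (fun n => μ n Ω) hsum.ne)
    (Or.inr (ENNReal.mul_ne_top hlamtop hc0))
  rw [mul_zero] at hlim
  exact le_antisymm (ge_of_tendsto' hlim key) bot_le
end

section
/- Let X be a metric space, let Σ denote the family of all closed balls in X, and let F : Σ → [0,∞) be a set function such that: (a) if A, B ∈ Σ and A ⊂ B then F(A) ≤ F(B); and (b) for every x ∈ X and r₀ ∈ (0,∞), lim_{r↓r₀} F(B_r(x)) = F(B_{r₀}(x)). Fix r₀ ∈ (0,∞) and define h(x) := F(B_{r₀}(x)). Then h is upper semicontinuous on X, and in particular Borel measurable. -/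
open MeasureTheory Metric Filter Set
open scoped ENNReal Topology

/-- If `F` is a nonnegative, monotone set function on closed balls which is
right-continuous in the radius, then `x ↦ F(B_{r₀}(x))` is upper semicontinuous,
and in particular Borel measurable. -/
theorem statement7 {X : Type*} [MetricSpace X] [MeasurableSpace X] [BorelSpace X]
    (F : Set X → ℝ)
    (hF0 : ∀ (x : X) (r : ℝ), 0 < r → 0 ≤ F (closedBall x r))
    (hmono : ∀ (x₁ x₂ : X) (r₁ r₂ : ℝ), 0 < r₁ → 0 < r₂ →
      closedBall x₁ r₁ ⊆ closedBall x₂ r₂ →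
      F (closedBall x₁ r₁) ≤ F (closedBall x₂ r₂))
    (hcont : ∀ (x : X) (r₀ : ℝ), 0 < r₀ →
      Tendsto (fun r : ℝ => F (closedBall x r)) (𝓝[>] r₀) (𝓝 (F (closedBall x r₀))))
    (r₀ : ℝ) (hr₀ : 0 < r₀) :
    UpperSemicontinuous (fun x : X => F (closedBall x r₀)) ∧
      Measurable (fun x : X => F (closedBall x r₀)) := by
  have h : UpperSemicontinuous (fun x : X => F (closedBall x r₀)) := by
    intro x y hy
    have h1 : ∀ᶠ r in 𝓝[>] r₀, F (closedBall x r) < y :=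
      (hcont x r₀ hr₀).eventually (gt_mem_nhds hy)
    obtain ⟨r, hr, hlt⟩ := (h1.and self_mem_nhdsWithin).exists
    have hlt' : r₀ < r := hlt
    filter_upwards [ball_mem_nhds x (sub_pos.2 hlt')] with z hz
    refine lt_of_le_of_lt (hmono z x r₀ r hr₀ (hr₀.trans hlt') ?_) hr
    apply closedBall_subset_closedBall'
    have := mem_ball.1 hz
    linarith
  exact ⟨h, h.measurable⟩
end

section
/- Let X be a metric space and μ a Borel measure on X such that 0 < μ(B) < ∞ for every closed ball B ⊂ X. Let W : X×X → [0,∞) be locally integrable with respect to μ×μ. Fix σ ∈ (0,∞) and define G(x) := ⨍_{B_σ(x)} ⨍_{B_σ(x)} W(z,y) dμ(z) dμ(y). Then G is Borel measurable on X. -/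
open MeasureTheory Metric Filter Set
open scoped ENNReal Topology

theorem aux_meas {X : Type*} [MetricSpace X] [MeasurableSpace X] [BorelSpace X]
    (μ : Measure X)
    (hball : ∀ (x : X) (r : ℝ), 0 < r →
      0 < μ (closedBall x r) ∧ μ (closedBall x r) < ⊤)
    (W : X → X → ℝ≥0∞) (hWmeas : Measurable (fun p : X × X => W p.1 p.2))
    (hWloc : ∀ (x : X) (r : ℝ), 0 < r →
      ∫⁻ z in closedBall x r, ∫⁻ y in closedBall x r, W z y ∂μ ∂μ < ⊤)
    (σ : ℝ) (hσ : 0 < σ) :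
    Measurable (fun x : X =>
        ∫⁻ z in closedBall x σ, ∫⁻ y in closedBall x σ, W z y ∂μ ∂μ) := by
  apply UpperSemicontinuous.measurable
  intro x c hc
  have hfin : IsFiniteMeasure (μ.restrict (closedBall x (σ + 1))) :=
    ⟨by simpa using (hball x (σ + 1) (by linarith)).2⟩
  let ρ : Measure (X × X) := ((μ.restrict (closedBall x (σ + 1))).prod
    (μ.restrict (closedBall x (σ + 1)))).withDensity (fun p : X × X => W p.1 p.2)
  have key : ∀ A : Set X, MeasurableSet A → A ⊆ closedBall x (σ + 1) →
      ρ (A ×ˢ A) = ∫⁻ z in A, ∫⁻ y in A, W z y ∂μ ∂μ := by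
    intro A hA hAs
    have hf : IsFiniteMeasure (μ.restrict A) :=
      ⟨by simpa using (measure_mono hAs).trans_lt (hball x (σ + 1) (by linarith)).2⟩
    rw [withDensity_apply _ (hA.prod hA), ← Measure.prod_restrict,
      Measure.restrict_restrict hA, inter_eq_left.2 hAs,
      lintegral_prod _ hWmeas.aemeasurable]
  obtain ⟨u, hu, hu0, hul⟩ := exists_seq_strictAnti_tendsto' (show (0 : ℝ) < 1 by norm_num)
  let S : ℕ → Set (X × X) := fun n => closedBall x (σ + u n) ×ˢ closedBall x (σ + u n)
  have hsub : ∀ n, closedBall x (σ + u n) ⊆ closedBall x (σ + 1) := fun n =>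
    closedBall_subset_closedBall (by linarith [(hu0 n).2])
  have hS : ⋂ n, S n = closedBall x σ ×ˢ closedBall x σ := by
    ext p
    simp only [S, mem_iInter, mem_prod, mem_closedBall]
    constructor
    · intro h
      have ht : Tendsto (fun n => σ + u n) atTop (𝓝 σ) := by simpa using hul.const_add σ
      exact ⟨ge_of_tendsto' ht fun n => (h n).1, ge_of_tendsto' ht fun n => (h n).2⟩
    · intro h n
      have := (hu0 n).1
      exact ⟨by linarith [h.1], by linarith [h.2]⟩
  have hlim : Tendsto (fun n => ρ (S n)) atTop (𝓝 (ρ (⋂ n, S n))) := by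
    apply tendsto_measure_iInter_atTop
    · exact fun n => (measurableSet_closedBall.prod measurableSet_closedBall).nullMeasurableSet
    · intro m n hmn
      have : closedBall x (σ + u n) ⊆ closedBall x (σ + u m) :=
        closedBall_subset_closedBall (by linarith [hu.antitone hmn])
      exact prod_mono this this
    · refine ⟨0, ?_⟩
      simp only [S]
      rw [key _ measurableSet_closedBall (hsub 0)]
      exact (hWloc x _ (by linarith [(hu0 0).1])).ne
  rw [hS, key _ measurableSet_closedBall (closedBall_subset_closedBall (by linarith))] at hlim
  obtain ⟨n, hn⟩ := (hlim.eventually_lt_const hc).exists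
  filter_upwards [closedBall_mem_nhds x (hu0 n).1] with y hy
  have h1 : closedBall y σ ⊆ closedBall x (σ + u n) :=
    closedBall_subset_closedBall' (by linarith [mem_closedBall.1 hy])
  refine lt_of_le_of_lt ?_ hn
  rw [← key _ measurableSet_closedBall (h1.trans (hsub n))]
  exact measure_mono (prod_mono h1 h1)

/-- If `μ` is a Borel measure giving every closed ball positive finite measure and
`W ≥ 0` is locally integrable on `X × X`, then the double ball average
`G(x) = ⨍_{B_σ(x)} ⨍_{B_σ(x)} W(z,y) dμ(z) dμ(y)` is Borel measurable. -/
theorem statement8 {X : Type*} [MetricSpace X] [MeasurableSpace X] [BorelSpace X]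
    (μ : Measure X)
    (hball : ∀ (x : X) (r : ℝ), 0 < r →
      0 < μ (closedBall x r) ∧ μ (closedBall x r) < ⊤)
    (W : X → X → ℝ≥0∞) (hWmeas : Measurable (fun p : X × X => W p.1 p.2))
    (hWloc : ∀ (x : X) (r : ℝ), 0 < r →
      ∫⁻ z in closedBall x r, ∫⁻ y in closedBall x r, W z y ∂μ ∂μ < ⊤)
    (σ : ℝ) (hσ : 0 < σ) :
    Measurable (fun x : X =>
      (μ (closedBall x σ))⁻¹ * (μ (closedBall x σ))⁻¹ *
        ∫⁻ z in closedBall x σ, ∫⁻ y in closedBall x σ, W z y ∂μ ∂μ) := by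
  have h1 := aux_meas μ hball (fun _ _ => 1) measurable_const (by
    intro x r hr
    simpa using ENNReal.mul_lt_top (hball x r hr).2 (hball x r hr).2) σ hσ
  have h2 := aux_meas μ hball W hWmeas hWloc σ hσ
  convert h1.inv.mul h2 using 1
  funext x
  obtain ⟨ha, hb⟩ := hball x σ hσ
  simp [ENNReal.mul_inv (Or.inl ha.ne') (Or.inl hb.ne)]
end

section
/- Let X be a metric space, Ω ⊂ X open, and μ an Ahlfors s-regular measure on Ω for some s ∈ (0,∞). Let (ε_n) and (η_n) be sequences of positive reals with ε_n → 0, let W ∈ L¹_loc(Ω×Ω, μ×μ), W ≥ 0, and let ζ be a gauge satisfying the four admissibility conditions, with associated Carathéodory measure ψ. Assume liminf_{n→∞} ( η_n ∫_Ω ε_n^{−s} ζ(B_{ε_n}(x)) [ ⨍_{B_{ε_n}(x)} χ_Ω(z) W(z,x) dμ(z) ] dμ(x) ) < ∞. Then the set D := { x ∈ Ω : liminf_{n→∞} η_n ⨍_{B_{ε_n/2}(x)} ⨍_{B_{ε_n/2}(x)} W(z,y) dμ(z) dμ(y) > 0 } is σ-finite with respect to ψ, and for every x ∈ Ω \ D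 the liminf above equals 0. -/
open MeasureTheory Metric Filter Set
open scoped ENNReal Topology

theorem caraPre_le_tsum {X : Type*} [MetricSpace X] [MeasurableSpace X]
    (ζ : Set X → ℝ≥0∞) (δ : ℝ) (A : Set X) {ι : Type*} [Countable ι] (f : ι → Set X)
    (hm : ∀ i, MeasurableSet (f i)) (hd : ∀ i, EMetric.diam (f i) ≤ ENNReal.ofReal δ)
    (hA : A ⊆ ⋃ i, f i) : caraPre ζ δ A ≤ ∑' i, ζ (f i) := by
  unfold caraPre
  refine iInf_le_of_le (range f) (iInf_le_of_le (countable_range f) (iInf_le_of_le ?_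
    (iInf_le_of_le ?_ (iInf_le_of_le ?_ ?_))))
  · rintro _ ⟨i, rfl⟩; exact hm i
  · rintro _ ⟨i, rfl⟩; exact hd i
  · simpa [sUnion_range] using hA
  · choose g hg using fun S : range f => S.2
    have hinj : Function.Injective g := by
      intro S T h
      apply Subtype.ext
      rw [← hg S, ← hg T, h]
    calc ∑' S : range f, ζ S.1 = ∑' S : range f, (fun i => ζ (f i)) (g S) := by
          simp only [hg]
      _ ≤ _ := ENNReal.tsum_comp_le_tsum_of_injective hinj (fun i => ζ (f i))

theorem ball_est {X : Type*} [MetricSpace X] [MeasurableSpace X] [BorelSpace X]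
    (Ω : Set X) (μ : Measure X) (s c C : ℝ) (hc : 0 < c) (hC : 0 < C)
    (hAhl : ∀ x ∈ Ω, ∀ ρ : ℝ, 0 < ρ →
      ENNReal.ofReal ρ < EMetric.diam Ω →
      ENNReal.ofReal (c * ρ ^ s) ≤ μ (closedBall x ρ) ∧
        μ (closedBall x ρ) ≤ ENNReal.ofReal (C * ρ ^ s))
    (ε : ℝ) (hε : 0 < ε) (hεd : ENNReal.ofReal ε < EMetric.diam Ω) (η κ : ℝ≥0∞)
    (W : X → X → ℝ≥0∞) (hWmeas : Measurable (fun p : X × X => W p.1 p.2))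
    (ζ : Set X → ℝ≥0∞) (lam' : ℝ≥0∞) (hlam' : 0 < lam') (hlam'top : lam' ≠ ⊤)
    (x : X) (hx : x ∈ Ω) (hsub : closedBall x ε ⊆ Ω)
    (hζ : ∀ y ∈ closedBall x (ε / 2), ζ (closedBall x ε) ≤ lam' * ζ (closedBall y ε))
    (hD : κ ≤ η * doubleAvg μ W x (ε / 2)) :
    (κ * lam'⁻¹ * ENNReal.ofReal (c ^ 2 / C * ((1 / 2 : ℝ) ^ s) ^ 2)) * ζ (closedBall x ε) ≤
      η * ∫⁻ x in closedBall x (ε / 2), (ENNReal.ofReal ε ^ s)⁻¹ * ζ (closedBall x ε) *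
              ((μ (closedBall x ε))⁻¹ * ∫⁻ z in closedBall x ε ∩ Ω, W z x ∂μ) ∂μ := by
  have hε2 : ENNReal.ofReal (ε / 2) < EMetric.diam Ω :=
    (ENNReal.ofReal_le_ofReal (by linarith)).trans_lt hεd
  obtain ⟨hlow, hup⟩ := hAhl x hx (ε / 2) (by linarith) hε2
  have hsub2 : closedBall x (ε / 2) ⊆ Ω := (closedBall_subset_closedBall (by linarith)).trans hsub
  set B := closedBall x (ε / 2) with hB
  set m := μ B with hm
  have hcpos : 0 < c * (ε / 2) ^ s := by positivity
  have hm0 : m ≠ 0 := (lt_of_lt_of_le (ENNReal.ofReal_pos.2 hcpos) hlow).ne'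
  have hmt : m ≠ ⊤ := (hup.trans_lt ENNReal.ofReal_lt_top).ne
  haveI : IsFiniteMeasure (μ.restrict B) := ⟨by simpa using hmt.lt_top⟩
  have hJ : κ * (m * m) ≤ η * ∫⁻ y in B, ∫⁻ z in B, W z y ∂μ ∂μ := by
    have hsw : ∫⁻ z in B, ∫⁻ y in B, W z y ∂μ ∂μ = ∫⁻ y in B, ∫⁻ z in B, W z y ∂μ ∂μ :=
      lintegral_lintegral_swap hWmeas.aemeasurable
    rw [← hsw]
    unfold doubleAvg at hD
    rw [← hB, ← hm] at hD
    calc κ * (m * m) ≤ (η * (m⁻¹ * m⁻¹ * ∫⁻ z in B, ∫⁻ y in B, W z y ∂μ ∂μ)) * (m * m) := by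
          gcongr
      _ = (m⁻¹ * m) * (m⁻¹ * m) * (η * ∫⁻ z in B, ∫⁻ y in B, W z y ∂μ ∂μ) := by ring
      _ = _ := by rw [ENNReal.inv_mul_cancel hm0 hmt]; simp
  have hE : ENNReal.ofReal ε ^ s = ENNReal.ofReal (ε ^ s) := ENNReal.ofReal_rpow_of_pos hε
  have hpt : ∀ y ∈ B, (ENNReal.ofReal (ε ^ s))⁻¹ * (lam'⁻¹ * ζ (closedBall x ε)) *
        (ENNReal.ofReal (C * ε ^ s))⁻¹ * ∫⁻ z in B, W z y ∂μ ≤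
      (ENNReal.ofReal ε ^ s)⁻¹ * ζ (closedBall y ε) *
              ((μ (closedBall y ε))⁻¹ * ∫⁻ z in closedBall y ε ∩ Ω, W z y ∂μ) := by
    intro y hy
    rw [hE, mul_assoc]
    have h1 : lam'⁻¹ * ζ (closedBall x ε) ≤ ζ (closedBall y ε) := by
      calc lam'⁻¹ * ζ (closedBall x ε) ≤ lam'⁻¹ * (lam' * ζ (closedBall y ε)) := by
            gcongr; exact hζ y hy
        _ = _ := by rw [← mul_assoc, ENNReal.inv_mul_cancel hlam'.ne' hlam'top, one_mul]
    have h2 := (hAhl y (hsub2 hy) ε hε hεd).2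
    have h3 : B ⊆ closedBall y ε ∩ Ω := by
      refine subset_inter ?_ hsub2
      intro z hz
      rw [hB, mem_closedBall] at hz hy
      rw [mem_closedBall]
      linarith [dist_triangle_right z y x]
    gcongr
  have hreal : (ENNReal.ofReal (ε ^ s))⁻¹ * (ENNReal.ofReal (C * ε ^ s))⁻¹ *
      (ENNReal.ofReal (c * (ε / 2) ^ s) * ENNReal.ofReal (c * (ε / 2) ^ s)) =
      ENNReal.ofReal (c ^ 2 / C * ((1 / 2 : ℝ) ^ s) ^ 2) := by
    have hp : 0 < ε ^ s := by positivity
    rw [← ENNReal.ofReal_inv_of_pos hp, ← ENNReal.ofReal_inv_of_pos (by positivity),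
      ← ENNReal.ofReal_mul (by positivity), ← ENNReal.ofReal_mul (by positivity),
      ← ENNReal.ofReal_mul (by positivity)]
    congr 1
    have : (ε / 2) ^ s = ε ^ s * (1 / 2 : ℝ) ^ s := by
      rw [← Real.mul_rpow hε.le (by norm_num)]; congr 1; ring
    rw [this]
    field_simp
  set Z := ζ (closedBall x ε)
  set P := ENNReal.ofReal (ε ^ s)
  set Q := ENNReal.ofReal (C * ε ^ s)
  calc _ = P⁻¹ * (lam'⁻¹ * Z) * Q⁻¹ * (κ *
        (ENNReal.ofReal (c * (ε / 2) ^ s) * ENNReal.ofReal (c * (ε / 2) ^ s))) := by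
        rw [← hreal]; ring
    _ ≤ P⁻¹ * (lam'⁻¹ * Z) * Q⁻¹ * (κ * (m * m)) := by gcongr
    _ ≤ P⁻¹ * (lam'⁻¹ * Z) * Q⁻¹ * (η * ∫⁻ y in B, ∫⁻ z in B, W z y ∂μ ∂μ) := by gcongr
    _ = η * (P⁻¹ * (lam'⁻¹ * Z) * Q⁻¹ * ∫⁻ y in B, ∫⁻ z in B, W z y ∂μ ∂μ) := by ring
    _ ≤ η * ∫⁻ y in B, P⁻¹ * (lam'⁻¹ * Z) * Q⁻¹ * ∫⁻ z in B, W z y ∂μ ∂μ := by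
        gcongr; exact lintegral_const_mul_le _ _
    _ ≤ _ := by
        refine mul_le_mul_right ?_ _
        exact setLIntegral_mono' isClosed_closedBall.measurableSet hpt

/-- Part 2 of the abstract fine-property theorem: if the liminf of the weighted
`ζ`-energies is finite, then the set `D` where the liminf of the weighted double
averages at half scale is positive is `σ`-finite with respect to `ψ`, and this liminf
vanishes outside `D`. -/
theorem statement10 {X : Type*} [MetricSpace X] [MeasurableSpace X] [BorelSpace X]
    (Ω : Set X) (hΩ : IsOpen Ω) (μ : Measure X) (s : ℝ) (hs : 0 < s)
    (hAhl : ∃ c C : ℝ, 0 < c ∧ 0 < C ∧ ∀ x ∈ Ω, ∀ ρ : ℝ, 0 < ρ →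
      ENNReal.ofReal ρ < EMetric.diam Ω →
      ENNReal.ofReal (c * ρ ^ s) ≤ μ (closedBall x ρ) ∧
        μ (closedBall x ρ) ≤ ENNReal.ofReal (C * ρ ^ s))
    (ε η : ℕ → ℝ) (hε : ∀ n, 0 < ε n) (hη : ∀ n, 0 < η n)
    (hεlim : Tendsto ε atTop (𝓝 0))
    (W : X → X → ℝ≥0∞) (hWmeas : Measurable (fun p : X × X => W p.1 p.2))
    (hWloc : ∀ x ∈ Ω, ∀ R : ℝ, 0 < R →
      ∫⁻ z in closedBall x R ∩ Ω, ∫⁻ y in closedBall x R ∩ Ω, W z y ∂μ ∂μ < ⊤)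
    (ζ : Set X → ℝ≥0∞)
    (I γ γ' lam lam' : ℝ≥0∞) (hI : 0 < I) (hγ : 0 < γ) (hγ' : 0 < γ')
    (hlam : 0 < lam) (hlamtop : lam ≠ ⊤) (hlam' : 0 < lam') (hlam'top : lam' ≠ ⊤)
    (hζfin : ∀ (x : X) (R : ℝ), 0 < R → ENNReal.ofReal R < I →
      0 < ζ (closedBall x R) ∧ ζ (closedBall x R) < ⊤)
    (hζdbl : ∀ (x : X) (R : ℝ), 0 < R → ENNReal.ofReal R < γ →
      ζ (closedBall x (5 * R)) ≤ lam * ζ (closedBall x R))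
    (hζcomp : ∀ (x y : X) (R : ℝ), 0 < R → ENNReal.ofReal R < γ' →
      y ∈ closedBall x (R / 2) → ζ (closedBall x R) ≤ lam' * ζ (closedBall y R))
    (hζmeas : ∀ R : ℝ, 0 < R → AEMeasurable (fun x : X => ζ (closedBall x R)) μ)
    (hfin : liminf (fun n => ENNReal.ofReal (η n) *
            ∫⁻ x in Ω, (ENNReal.ofReal (ε n) ^ s)⁻¹ * ζ (closedBall x (ε n)) *
              ((μ (closedBall x (ε n)))⁻¹ *
                ∫⁻ z in closedBall x (ε n) ∩ Ω, W z x ∂μ) ∂μ) atTop < ⊤) :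
    (∃ F : ℕ → Set X,
      {x ∈ Ω | 0 < liminf (fun n =>
          ENNReal.ofReal (η n) * doubleAvg μ W x (ε n / 2)) atTop} = ⋃ n, F n ∧
        ∀ n, caraMeas ζ (F n) < ⊤) ∧
    ∀ x ∈ Ω \ {x ∈ Ω | 0 < liminf (fun n =>
          ENNReal.ofReal (η n) * doubleAvg μ W x (ε n / 2)) atTop},
      liminf (fun n => ENNReal.ofReal (η n) * doubleAvg μ W x (ε n / 2)) atTop = 0 := by
  refine ⟨?_, ?_⟩
  swap
  · rintro x ⟨hx, hx2⟩
    by_contra h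
    exact hx2 ⟨hx, pos_iff_ne_zero.2 h⟩
  refine ⟨fun k => {x ∈ Ω | closedBall x (1 / ((k : ℝ) + 1)) ⊆ Ω ∧ ∀ n, k ≤ n →
    ((k : ℝ≥0∞) + 1)⁻¹ ≤ ENNReal.ofReal (η n) * doubleAvg μ W x (ε n / 2)}, ?_, ?_⟩
  · ext x
    simp only [mem_setOf_eq, mem_iUnion]
    constructor
    · rintro ⟨hx, hpos⟩
      obtain ⟨a, ha0, ha⟩ := exists_between hpos
      obtain ⟨N, hN⟩ := eventually_atTop.1 (eventually_lt_of_lt_liminf ha)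
      obtain ⟨k1, hk1⟩ := ENNReal.exists_inv_nat_lt ha0.ne'
      obtain ⟨r, hr, hrs⟩ := nhds_basis_closedBall.mem_iff.1 (hΩ.mem_nhds hx)
      obtain ⟨k2, hk2⟩ := exists_nat_one_div_lt hr
      refine ⟨max N (max k1 k2), hx, ?_, ?_⟩
      · refine (closedBall_subset_closedBall ?_).trans hrs
        refine le_trans ?_ hk2.le
        have : (k2 : ℝ) ≤ ((max N (max k1 k2) : ℕ) : ℝ) := by
          exact_mod_cast (le_max_right _ _).trans (le_max_right _ _)
        exact one_div_le_one_div_of_le (by positivity) (by linarith)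
      · intro n hn
        refine le_trans ?_ (hN n ((le_max_left _ _).trans hn)).le
        refine le_trans ?_ hk1.le
        rw [ENNReal.inv_le_inv]
        have : (k1 : ℝ≥0∞) ≤ ((max N (max k1 k2) : ℕ) : ℝ≥0∞) := by
          exact_mod_cast (le_max_left _ _).trans (le_max_right _ _)
        exact this.trans le_self_add
    · rintro ⟨k, hx, -, hk⟩
      refine ⟨hx, lt_of_lt_of_le ?_ (le_liminf_of_le (by isBoundedDefault)
        (eventually_atTop.2 ⟨k, hk⟩))⟩
      simp [ENNReal.inv_pos]
  intro k
  set F := {x ∈ Ω | closedBall x (1 / ((k : ℝ) + 1)) ⊆ Ω ∧ ∀ n, k ≤ n →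
    ((k : ℝ≥0∞) + 1)⁻¹ ≤ ENNReal.ofReal (η n) * doubleAvg μ W x (ε n / 2)} with hF
  -- a positive real below any positive extended real
  have small : ∀ a : ℝ≥0∞, 0 < a → ∀ᶠ n in atTop, ENNReal.ofReal (ε n) < a := by
    intro a ha
    have h : Tendsto (fun n => ENNReal.ofReal (ε n)) atTop (𝓝 0) := by
      simpa using ENNReal.tendsto_ofReal hεlim
    exact h.eventually (gt_mem_nhds ha)
  rcases eq_or_ne (EMetric.diam Ω) 0 with hd0 | hd0
  · have hss : Ω.Subsingleton := EMetric.diam_eq_zero_iff.1 hd0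
    rcases Ω.eq_empty_or_nonempty with he | ⟨x, hx⟩
    · have : caraMeas ζ F ≤ 0 := by
        refine iSup₂_le fun δ hδ => ?_
        refine (caraPre_le_tsum ζ δ F (ι := Empty) (fun _ => ∅) (by simp) (by simp) ?_).trans
          (by simp)
        intro y hy
        have := hy.1
        simp [he] at this
      exact this.trans_lt (by simp)
    · obtain ⟨r, hr, hrs⟩ := nhds_basis_closedBall.mem_iff.1 (hΩ.mem_nhds hx)
      obtain ⟨n, hn1, hn2⟩ := ((small I hI).and (hεlim.eventually (gt_mem_nhds hr))).exists
      have hb : closedBall x (ε n) ⊆ Ω := (closedBall_subset_closedBall hn2.le).trans hrs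
      have : caraMeas ζ F ≤ ζ (closedBall x (ε n)) := by
        refine iSup₂_le fun δ hδ => ?_
        refine (caraPre_le_tsum ζ δ F (ι := Unit) (fun _ => closedBall x (ε n))
          (fun _ => isClosed_closedBall.measurableSet) ?_ ?_).trans (by simp)
        · intro _
          exact (EMetric.diam_mono hb).trans (hd0.le.trans bot_le)
        · intro y hy
          rw [hss hy.1 hx]
          simp [(hε n).le]
      exact this.trans_lt (hζfin x (ε n) (hε n) hn1).2
  have hdpos : 0 < EMetric.diam Ω := pos_iff_ne_zero.2 hd0
  obtain ⟨c, C, hc, hC, hA⟩ := hAhl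
  obtain ⟨M, hM, hMt⟩ := exists_between hfin
  have hfreq := frequently_lt_of_liminf_lt (by isBoundedDefault) hM
  set a : ℝ≥0∞ := ((k : ℝ≥0∞) + 1)⁻¹ * lam'⁻¹ *
    ENNReal.ofReal (c ^ 2 / C * ((1 / 2 : ℝ) ^ s) ^ 2) with ha
  have ha0 : a ≠ 0 := by
    have h1 : ((k : ℝ≥0∞) + 1)⁻¹ ≠ 0 := by simp
    have h2 : lam'⁻¹ ≠ 0 := by simpa using hlam'top
    have h3 : ENNReal.ofReal (c ^ 2 / C * ((1 / 2 : ℝ) ^ s) ^ 2) ≠ 0 :=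
      (ENNReal.ofReal_pos.2 (by positivity)).ne'
    exact mul_ne_zero (mul_ne_zero h1 h2) h3
  suffices h : caraMeas ζ F ≤ M / a from
    h.trans_lt (ENNReal.div_lt_top hMt.ne ha0)
  refine iSup₂_le fun δ hδ => ?_
  have hk1 : (0 : ℝ) < 1 / ((k : ℝ) + 1) := by positivity
  obtain ⟨n, hnM, hnI, hnγ, hnd, hnδ, hnk, hkn⟩ := (hfreq.and_eventually
    ((small I hI).and ((small γ' hγ').and ((small _ hdpos).and
    ((hεlim.eventually (gt_mem_nhds (half_pos hδ))).and
    ((hεlim.eventually (gt_mem_nhds hk1)).and (eventually_ge_atTop k))))))).exists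
  have hen := hε n
  obtain ⟨u, huF, hudisj, hucov⟩ := Vitali.exists_disjoint_subfamily_covering_enlargement
    (fun x : X => closedBall x (ε n / 2)) F (fun _ => (1 : ℝ)) 2 (by norm_num) (by simp) 1 (by simp)
    (fun x _ => ⟨x, mem_closedBall_self (half_pos hen).le⟩)
  have hFsub : ∀ x ∈ F, closedBall x (ε n) ⊆ Ω := fun x hx =>
    (closedBall_subset_closedBall hnk.le).trans hx.2.1
  have hsum : ∑' i : u, ζ (closedBall i.1 (ε n)) ≤ M / a := by
    rw [ENNReal.tsum_eq_iSup_sum]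
    refine iSup_le fun T => ?_
    rw [ENNReal.le_div_iff_mul_le (Or.inl ha0) (Or.inr hMt.ne), mul_comm, Finset.mul_sum]
    refine le_trans ?_ hnM.le
    calc _ ≤ ∑ i ∈ T, ENNReal.ofReal (η n) * ∫⁻ x in closedBall i.1 (ε n / 2),
            (ENNReal.ofReal (ε n) ^ s)⁻¹ * ζ (closedBall x (ε n)) *
              ((μ (closedBall x (ε n)))⁻¹ *
                ∫⁻ z in closedBall x (ε n) ∩ Ω, W z x ∂μ) ∂μ := by
          refine Finset.sum_le_sum fun i _ => ?_
          have hi := huF i.2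
          exact ball_est Ω μ s c C hc hC hA (ε n) hen hnd _ _ W hWmeas ζ lam' hlam' hlam'top
            i.1 hi.1 (hFsub _ hi) (fun y hy => hζcomp i.1 y (ε n) hen hnγ hy) (hi.2.2 n hkn)
      _ = ENNReal.ofReal (η n) * ∫⁻ x in ⋃ i ∈ T, closedBall i.1 (ε n / 2),
            (ENNReal.ofReal (ε n) ^ s)⁻¹ * ζ (closedBall x (ε n)) *
              ((μ (closedBall x (ε n)))⁻¹ *
                ∫⁻ z in closedBall x (ε n) ∩ Ω, W z x ∂μ) ∂μ := by
          rw [← Finset.mul_sum, lintegral_biUnion_finset]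
          · intro i _ j _ hij
            exact hudisj i.2 j.2 (fun h => hij (Subtype.ext h))
          · intro i _
            exact isClosed_closedBall.measurableSet
      _ ≤ _ := by
          refine mul_le_mul_right ?_ _
          refine lintegral_mono_set (iUnion₂_subset fun i _ => ?_)
          exact (closedBall_subset_closedBall (by linarith)).trans (hFsub _ (huF i.2))
  have hcount : Countable u := by
    have hne : ∑' i : u, ζ (closedBall i.1 (ε n)) ≠ ⊤ :=
      (hsum.trans_lt (ENNReal.div_lt_top hMt.ne ha0)).ne
    have h := Summable.countable_support_ennreal hne
    have huniv : (Function.support fun i : u => ζ (closedBall i.1 (ε n))) = univ := by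
      ext i
      simpa using (hζfin i.1 (ε n) hen hnI).1.ne'
    rw [huniv] at h
    exact countable_univ_iff.1 h
  refine (caraPre_le_tsum ζ δ F (fun i : u => closedBall i.1 (ε n))
    (fun _ => isClosed_closedBall.measurableSet) ?_ ?_).trans hsum
  · intro i
    refine EMetric.diam_le fun y hy z hz => ?_
    rw [edist_dist]
    refine ENNReal.ofReal_le_ofReal ?_
    rw [mem_closedBall] at hy hz
    linarith [dist_triangle_right y z i.1]
  · intro x hx
    obtain ⟨b, hb, ⟨y, hy1, hy2⟩, -⟩ := hucov x hx
    refine mem_iUnion.2 ⟨⟨b, hb⟩, ?_⟩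
    simp only [mem_closedBall] at hy1 hy2 ⊢
    linarith [dist_triangle_left x b y]
end

section
/- Let X be a metric space, let Σ be the collection of all closed balls in X, and let F : Σ → [0,∞] be monotone increasing (A ⊂ B, A,B ∈ Σ implies F(A) ≤ F(B)). Fix ξ ∈ (0,∞) and α ∈ [0,∞). Define D_seq := { x ∈ X : limsup_{n→∞} (n^α / e^{−nξ}) F(B_{e^{−n}}(x)) > 0 } and D := { x ∈ X : limsup_{σ→0⁺} (|ln σ|^α / σ^ξ) F(B_σ(x)) > 0 }. Then D = D_seq. -/
open MeasureTheory Metric Filter Set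
open scoped ENNReal Topology

/-- For a monotone set function `F` on closed balls, the set where
`limsup_{σ→0⁺} (|ln σ|^α / σ^ξ) F(B_σ(x)) > 0` coincides with the set where the
corresponding sequential limsup along the radii `σ = e^{-n}` is positive. -/
theorem statement16 {X : Type*} [MetricSpace X]
    (F : Set X → ℝ≥0∞)
    (hmono : ∀ (x₁ x₂ : X) (r₁ r₂ : ℝ), 0 < r₁ → 0 < r₂ →
      closedBall x₁ r₁ ⊆ closedBall x₂ r₂ →
      F (closedBall x₁ r₁) ≤ F (closedBall x₂ r₂))
    (ξ α : ℝ) (hξ : 0 < ξ) (hα : 0 ≤ α) :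
    {x : X | 0 < Filter.limsup (fun σ : ℝ =>
        ENNReal.ofReal (|Real.log σ| ^ α / σ ^ ξ) * F (closedBall x σ)) (𝓝[>] (0 : ℝ))}
      = {x : X | 0 < Filter.limsup (fun n : ℕ =>
        ENNReal.ofReal ((n : ℝ) ^ α / Real.exp (-(n : ℝ)) ^ ξ) *
          F (closedBall x (Real.exp (-(n : ℝ))))) Filter.atTop} := by
  ext x
  simp only [mem_setOf_eq]
  set g : ℝ → ℝ≥0∞ := fun σ : ℝ =>
    ENNReal.ofReal (|Real.log σ| ^ α / σ ^ ξ) * F (closedBall x σ) with hg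
  set s : ℕ → ℝ≥0∞ := fun n : ℕ =>
    ENNReal.ofReal ((n : ℝ) ^ α / Real.exp (-(n : ℝ)) ^ ξ) *
      F (closedBall x (Real.exp (-(n : ℝ)))) with hs
  constructor
  · intro h
    set C : ℝ := 2 ^ α * Real.exp 1 ^ ξ with hC
    have hC0 : 0 ≤ C := by positivity
    set N : ℝ → ℕ := fun σ => ⌊-Real.log σ⌋₊ with hN
    have hNt : Tendsto N (𝓝[>] (0 : ℝ)) atTop :=
      tendsto_nat_floor_atTop.comp
        (tendsto_neg_atBot_atTop.comp Real.tendsto_log_nhdsGT_zero)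
    have hle : ∀ᶠ σ in 𝓝[>] (0 : ℝ), g σ ≤ ENNReal.ofReal C * s (N σ) := by
      filter_upwards [self_mem_nhdsWithin, hNt.eventually_ge_atTop 1] with σ hσ hn
      have hσ0 : 0 < σ := hσ
      have hn1 : (1 : ℝ) ≤ (N σ : ℝ) := by exact_mod_cast hn
      have hlog0 : 0 ≤ -Real.log σ := by
        by_contra hc
        have : N σ = 0 := Nat.floor_of_nonpos (by linarith)
        omega
      have hfl : (N σ : ℝ) ≤ -Real.log σ := Nat.floor_le hlog0
      have hfu : -Real.log σ < (N σ : ℝ) + 1 := Nat.lt_floor_add_one _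
      have h1 : σ ≤ Real.exp (-(N σ : ℝ)) := by
        rw [← Real.log_le_iff_le_exp hσ0]; linarith
      have h2 : Real.exp (-(N σ : ℝ)) ≤ Real.exp 1 * σ := by
        have : Real.exp 1 * σ = Real.exp (1 + Real.log σ) := by
          rw [Real.exp_add, Real.exp_log hσ0]
        rw [this]
        exact Real.exp_le_exp.2 (by linarith)
      have h3 : |Real.log σ| ≤ 2 * (N σ : ℝ) := by
        rw [abs_of_nonpos (by linarith)]; linarith
      have hF : F (closedBall x σ) ≤ F (closedBall x (Real.exp (-(N σ : ℝ)))) :=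
        hmono _ _ _ _ hσ0 (Real.exp_pos _) (closedBall_subset_closedBall h1)
      have hreal : |Real.log σ| ^ α / σ ^ ξ ≤
          C * ((N σ : ℝ) ^ α / Real.exp (-(N σ : ℝ)) ^ ξ) := by
        have a1 : |Real.log σ| ^ α ≤ 2 ^ α * (N σ : ℝ) ^ α := by
          rw [← Real.mul_rpow (by norm_num) (by positivity)]
          exact Real.rpow_le_rpow (abs_nonneg _) h3 hα
        have a2 : Real.exp (-(N σ : ℝ)) ^ ξ ≤ Real.exp 1 ^ ξ * σ ^ ξ := by
          rw [← Real.mul_rpow (by positivity) hσ0.le]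
          exact Real.rpow_le_rpow (by positivity) h2 hξ.le
        have p1 : 0 < σ ^ ξ := Real.rpow_pos_of_pos hσ0 _
        have p2 : 0 < Real.exp (-(N σ : ℝ)) ^ ξ := Real.rpow_pos_of_pos (Real.exp_pos _) _
        rw [← mul_div_assoc, div_le_div_iff₀ p1 p2]
        calc |Real.log σ| ^ α * Real.exp (-(N σ : ℝ)) ^ ξ
            ≤ (2 ^ α * (N σ : ℝ) ^ α) * (Real.exp 1 ^ ξ * σ ^ ξ) :=
              mul_le_mul a1 a2 p2.le (by positivity)
          _ = C * (N σ : ℝ) ^ α * σ ^ ξ := by rw [hC]; ring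
      calc g σ ≤ ENNReal.ofReal (C * ((N σ : ℝ) ^ α / Real.exp (-(N σ : ℝ)) ^ ξ)) *
            F (closedBall x (Real.exp (-(N σ : ℝ)))) :=
            mul_le_mul' (ENNReal.ofReal_le_ofReal hreal) hF
        _ = ENNReal.ofReal C * s (N σ) := by
            rw [ENNReal.ofReal_mul hC0, mul_assoc]
    by_contra hc
    have hs0 : limsup s atTop = 0 := by simpa using hc
    have h4 : limsup (fun σ => s (N σ)) (𝓝[>] (0 : ℝ)) ≤ limsup s atTop :=
      limsup_le_limsup_of_le (u := s) hNt
    have h5 : limsup g (𝓝[>] (0 : ℝ)) ≤ 0 := by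
      calc limsup g (𝓝[>] (0 : ℝ))
          ≤ limsup (fun σ => ENNReal.ofReal C * s (N σ)) (𝓝[>] (0 : ℝ)) := limsup_le_limsup hle
        _ = ENNReal.ofReal C * limsup (fun σ => s (N σ)) (𝓝[>] (0 : ℝ)) :=
            ENNReal.limsup_const_mul_of_ne_top ENNReal.ofReal_ne_top
        _ ≤ ENNReal.ofReal C * 0 := by gcongr; exact h4.trans hs0.le
        _ = 0 := mul_zero _
    exact absurd h (not_lt.2 h5)
  · intro h
    have ht : Tendsto (fun n : ℕ => Real.exp (-(n : ℝ))) atTop (𝓝[>] (0 : ℝ)) := by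
      refine tendsto_nhdsWithin_iff.2 ⟨?_, Eventually.of_forall fun n => Real.exp_pos _⟩
      exact Real.tendsto_exp_neg_atTop_nhds_zero.comp tendsto_natCast_atTop_atTop
    have hsg : s = fun n : ℕ => g (Real.exp (-(n : ℝ))) := by
      funext n
      simp [hs, hg, Real.log_exp]
    refine h.trans_le ?_
    rw [hsg]
    exact limsup_le_limsup_of_le (u := g) ht
end
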